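/- Let ξ be a walk lift of some η ∈ X and let t ≥ 1 be an integer. Then: (i) for every k ≥ 1 and every k-soliton γ of η, #{i ∈ ℤ : γ ⊂ (−∞, s_k(ξ,i)) and γ^t ⊂ [s_k^t(ξ,i), ∞)} = k·t, i.e., the right-to-left flow of relabeled k-slots through a tagged k-soliton between times 0 and t is exactly kt; (ii) consequently the k-component of T^t ξ is a shift of that of ξ: M_k(T^t ξ)(i) = M_k ξ(i − o_k^t(ξ) − kt) for all i ∈ ℤ; (iii) for each k, the offset o_k^t(ξ) is determined by the components (M_m ξ)_{m>k} alone. -/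

import Mathlib

open MeasureTheory Filter Finset

/-- A ball configuration: a box at each integer, occupied (`true`) or empty (`false`). -/
abbrev Cfg := ℤ → Bool

/-- Numerical (integer) value of a box. -/
def valZ (b : Bool) : ℤ := if b then 1 else 0

/-- Numerical (real) value of a box. -/
def valR (b : Bool) : ℝ := if b then 1 else 0

/-- `x` is a record of the configuration `η`:
for every `z ≤ x`, the number of balls in `[z,x]` is strictly smaller than the
number of empty boxes in `[z,x]`. -/
def isRecord (η : Cfg) (x : ℤ) : Prop :=
  ∀ z ≤ x, (∑ y ∈ Finset.Icc z x, valZ (η y)) < ∑ y ∈ Finset.Icc z x, (1 - valZ (η y))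

open Classical in
/-- The box-ball (Takahashi–Satsuma) operator `T`. -/
noncomputable def bbsT (η : Cfg) : Cfg := fun x => if isRecord η x then false else !(η x)

/-- `η` has asymptotic density `lam` of balls on both half lines. -/
def inXlam (lam : ℝ) (η : Cfg) : Prop :=
  Tendsto (fun y : ℕ => (∑ x ∈ Finset.Icc (-(y : ℤ)) 0, valR (η x)) / (y : ℝ))
    atTop (nhds lam) ∧
  Tendsto (fun y : ℕ => (∑ x ∈ Finset.Icc (0 : ℤ) (y : ℤ), valR (η x)) / (y : ℝ))
    atTop (nhds lam)

/-- `η ∈ 𝒳`: it has a well-defined density `0 < lam < 1/2`. -/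
def inX (η : Cfg) : Prop := ∃ lam : ℝ, 0 < lam ∧ lam < 1 / 2 ∧ inXlam lam η

/-- `ξ` is a walk lift of the configuration `η`. -/
def IsLift (η : Cfg) (ξ : ℤ → ℤ) : Prop :=
  ∀ x : ℤ, ξ x - ξ (x - 1) = 2 * valZ (η x) - 1

/-- Running minimum `min_{y ≤ x} ξ(y)` of a walk. -/
noncomputable def runMin (ξ : ℤ → ℤ) (x : ℤ) : ℤ := sInf (ξ '' Set.Iic x)

/-- The box-ball operator on walks: reflection at the running minimum. -/
noncomputable def liftT (ξ : ℤ → ℤ) : ℤ → ℤ := fun x => 2 * runMin ξ x - ξ x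

/-- The canonical walk lift of `η` with value `0` at the origin. -/
noncomputable def xi0 (η : Cfg) : ℤ → ℤ := fun x =>
  if 0 ≤ x then ∑ y ∈ Finset.Icc 1 x, (2 * valZ (η y) - 1)
  else -∑ y ∈ Finset.Icc (x + 1) 0, (2 * valZ (η y) - 1)
/-- Maximal runs of a word of (position, letter) pairs. -/
def runsOf : List (ℤ × Bool) → List (List (ℤ × Bool))
  | [] => []
  | a :: l =>
    match runsOf l with
    | [] => [[a]]
    | r :: rs =>
      if (r.head?.map Prod.snd) = some a.2 then (a :: r) :: rs else [a] :: r :: rs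

/-- Takahashi–Satsuma step: find the leftmost run whose length is at least the
length of the run preceding it; the soliton consists of the preceding run
together with the first (that many) letters of the selected run. -/
def findSoliton : List (List (ℤ × Bool)) → Option (List (ℤ × Bool))
  | r1 :: r2 :: rest =>
    if r1.length ≤ r2.length then some (r1 ++ r2.take r1.length)
    else findSoliton (r2 :: rest)
  | _ => none

/-- Iterated Takahashi–Satsuma algorithm (with fuel): repeatedly identify the
soliton given by `findSoliton` and remove its letters from the word. -/
def tsAux : ℕ → List (ℤ × Bool) → List (List (ℤ × Bool))
  | 0, _ => []
  | fuel + 1, w =>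
    match findSoliton (runsOf w) with
    | none => []
    | some s => s :: tsAux fuel (w.filter (fun a => !((s.map Prod.fst).contains a.1)))

/-- The solitons identified by the Takahashi–Satsuma algorithm in a finite word. -/
def tsSolitons (w : List (ℤ × Bool)) : List (List (ℤ × Bool)) := tsAux w.length w

/-- The word (with positions) strictly between sites `y1` and `y2`. -/
def excursionWord (η : Cfg) (y1 y2 : ℤ) : List (ℤ × Bool) :=
  (List.range (y2 - y1 - 1).toNat).map fun n => (y1 + 1 + n, η (y1 + 1 + n))

/-- `Γ_k η`: the set of `k`-solitons of `η`, each identified with the set of `2k`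
sites it occupies.  A `k`-soliton is obtained by applying the Takahashi–Satsuma
algorithm to an excursion of `η` (the word between two consecutive records). -/
def Gamma (η : Cfg) (k : ℕ) : Set (Finset ℤ) :=
  {γ | ∃ y1 y2 : ℤ, y1 < y2 ∧ isRecord η y1 ∧ isRecord η y2 ∧
    (∀ z : ℤ, y1 < z → z < y2 → ¬ isRecord η z) ∧
    ∃ s ∈ tsSolitons (excursionWord η y1 y2), s.length = 2 * k ∧
      γ = (s.map Prod.fst).toFinset}

/-- The head of a soliton `γ` of `η`: the positions of its ones. -/
def headF (η : Cfg) (γ : Finset ℤ) : Finset ℤ := γ.filter fun x => η x = true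

/-- The tail of a soliton `γ` of `η`: the positions of its zeros. -/
def tailF (η : Cfg) (γ : Finset ℤ) : Finset ℤ := γ.filter fun x => η x = false
/-- `x` is a `k`-slot of `η`: either a record, or the `j`-th smallest site of the
tail or of the head of some soliton, with `j > k` (slot level `j - 1 ≥ k`). -/
def IsKSlot (η : Cfg) (k : ℕ) (x : ℤ) : Prop :=
  isRecord η x ∨ ∃ m : ℕ, ∃ γ ∈ Gamma η m,
    (x ∈ tailF η γ ∧ k < ((tailF η γ).filter fun y => y ≤ x).card) ∨
    (x ∈ headF η γ ∧ k < ((headF η γ).filter fun y => y ≤ x).card)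

open Classical in
/-- Increasing enumeration of a (doubly unbounded, locally finite) set `S ⊆ ℤ`,
normalized so that the `0`-th element is the base point `b`.  (Junk value if no
such enumeration exists.) -/
noncomputable def enumZ (S : Set ℤ) (b : ℤ) : ℤ → ℤ :=
  if h : ∃ f : ℤ → ℤ, StrictMono f ∧ f 0 = b ∧ Set.range f = S then h.choose
  else fun _ => 0

/-- Position `r(ξ,j)` of Record `j` of a walk `ξ`: leftmost site where `ξ` takes
the value `-j`. -/
noncomputable def recPos (ξ : ℤ → ℤ) (j : ℤ) : ℤ := sInf {x : ℤ | ξ x = -j}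

/-- `s_k(ξ,i)`: the `i`-th `k`-slot of the configuration `η` lifted by the walk
`ξ`, enumerated increasingly and normalized by `s_k(ξ,0) = r(ξ,0)`. -/
noncomputable def skEnum (η : Cfg) (ξ : ℤ → ℤ) (k : ℕ) : ℤ → ℤ :=
  enumZ {x : ℤ | IsKSlot η k x} (recPos ξ 0)

/-- `M_k ξ (i)`: the number of `k`-solitons appended to the `i`-th `k`-slot,
i.e. contained in `[s_k(ξ,i)+1, s_k(ξ,i+1)-1]`. -/
noncomputable def Mk (η : Cfg) (ξ : ℤ → ℤ) (k : ℕ) (i : ℤ) : ℕ :=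
  Set.ncard {γ | γ ∈ Gamma η k ∧
    ∀ x ∈ γ, skEnum η ξ k i < x ∧ x < skEnum η ξ k (i + 1)}

open Classical in
/-- The trajectory `γ^t` of a tagged `k`-soliton `γ` of `η`: `γ^0 = γ` and
`γ^{t+1}` is the `k`-soliton of `T^{t+1} η` whose head is the tail of `γ^t`. -/
noncomputable def solTraj (η : Cfg) (k : ℕ) (γ : Finset ℤ) : ℕ → Finset ℤ
  | 0 => γ
  | t + 1 =>
    if h : ∃ γ' ∈ Gamma (bbsT^[t + 1] η) k,
        headF (bbsT^[t + 1] η) γ' = tailF (bbsT^[t] η) (solTraj η k γ t)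
    then h.choose else ∅

/-- `J_m^t ξ`: the flow of `m`-solitons through Record `0` by time `t`. -/
noncomputable def Jflow (η : Cfg) (ξ : ℤ → ℤ) (m : ℕ) (t : ℕ) : ℕ :=
  Set.ncard {γ | γ ∈ Gamma η m ∧ (∀ x ∈ γ, x < recPos ξ 0) ∧
    ∀ x ∈ solTraj η m γ t, recPos (liftT^[t] ξ) 0 ≤ x}

/-- `o_k^t(ξ) = Σ_{m>k} 2(m-k)·J_m^t ξ`: the flow of `k`-slots through Record
`0` by time `t`, counted as the number of pairs (an `m`-soliton `γ` with `m > k`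
crossing Record `0` by time `t`, a site of `γ` of slot level `≥ k`); each such
`γ` carries exactly `2(m-k)` such sites. -/
noncomputable def oOff (η : Cfg) (ξ : ℤ → ℤ) (k : ℕ) (t : ℕ) : ℕ :=
  Set.ncard {p : Finset ℤ × ℤ | ∃ m : ℕ, k < m ∧ p.1 ∈ Gamma η m ∧
    (∀ x ∈ p.1, x < recPos ξ 0) ∧
    (∀ x ∈ solTraj η m p.1 t, recPos (liftT^[t] ξ) 0 ≤ x) ∧
    ((p.2 ∈ tailF η p.1 ∧ k < ((tailF η p.1).filter fun y => y ≤ p.2).card) ∨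
     (p.2 ∈ headF η p.1 ∧ k < ((headF η p.1).filter fun y => y ≤ p.2).card))}

/-- The relabeled `i`-th `k`-slot at time `t`:
`s_k^t(ξ,i) = s_k(T^t ξ, o_k^t(ξ) + i)`. -/
noncomputable def skEnumT (η : Cfg) (ξ : ℤ → ℤ) (k : ℕ) (t : ℕ) (i : ℤ) : ℤ :=
  skEnum (bbsT^[t] η) (liftT^[t] ξ) k ((oOff η ξ k t : ℤ) + i)

/-!
Let a carrier with numbered seats cross the configuration from the left: a ball takes the lowest
free seat and an empty box, unless it is a record, receives the ball from the lowest occupied one.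
The seat used at a box is its slot level, so a `k`-soliton consists of the boxes that use the seats
`0, …, k - 1` once to pick up a ball and once to put it down. Below any seat occupied in the carrier
of `η`, the carrier of `Tη` is in the complementary state; hence tails of `k`-solitons of `η` are
heads of `k`-solitons of `Tη`, with the same levels.

The number of seats below `k` occupied in the two carriers together is a potential: up to a constant
it is the difference of the numbers of `k`-slots of `Tη` and of `η` up to a box. At Record 0 of `η`
it vanishes, and at the last box of the tail of a `k`-soliton it equals `k`. So in one step the
index of the `k`-slot to which a `k`-soliton is appended grows by `k`, plus the number of `k`-slots
that larger solitons carry through Record 0. Summing over time gives the shift by `kt` plus the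
offset. Which `m`-solitons cross Record 0 is decided by this shift, so offsets are computed from the
components downward from the largest solitons.
-/

/-! ### Seats in a finite word -/

/-- Seat `s` receives the letter `b` when the carrier has state `W`, where `W j` tells whether
seat `j` is occupied: a ball takes the lowest free seat, an empty box frees the lowest occupied
one. -/
def IsSeat (W : ℕ → Bool) (b : Bool) (s : ℕ) : Prop :=
  W s = !b ∧ ∀ j < s, W j = b

theorem IsSeat.unique {W : ℕ → Bool} {b : Bool} {s t : ℕ} (hs : IsSeat W b s)
    (ht : IsSeat W b t) : s = t := by
  rcases lt_trichotomy s t with h | h | h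
  · have := hs.1.symm.trans (ht.2 s h); simp at this
  · exact h
  · have := ht.1.symm.trans (hs.2 t h); simp at this

/-- The state of a carrier that starts in state `W` and reads the word `w`, the letter at
position `x` going to seat `σ x`. -/
def stateAfter (σ : ℤ → ℕ) (W : ℕ → Bool) (w : List (ℤ × Bool)) : ℕ → Bool :=
  w.foldl (fun V a => Function.update V (σ a.1) a.2) W

/-- The labels `σ` are the seats used by a carrier that starts in state `W` and reads the given
word. -/
def SeatsWord (σ : ℤ → ℕ) : (ℕ → Bool) → List (ℤ × Bool) → Prop
  | _, [] => True
  | W, a :: w => IsSeat W a.2 (σ a.1) ∧ SeatsWord σ (Function.update W (σ a.1) a.2) w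

section Words

variable {σ : ℤ → ℕ} {W : ℕ → Bool} {b : Bool} {u v w s : List (ℤ × Bool)}
  {R : List (List (ℤ × Bool))} {k : ℕ}

theorem stateAfter_append :
    stateAfter σ W (u ++ v) = stateAfter σ (stateAfter σ W u) v :=
  List.foldl_append

theorem seatsWord_append :
    SeatsWord σ W (u ++ v) ↔ SeatsWord σ W u ∧ SeatsWord σ (stateAfter σ W u) v := by
  induction u generalizing W with
  | nil => simp [SeatsWord, stateAfter]
  | cons a u ih => simp [SeatsWord, stateAfter, ih, and_assoc]

theorem SeatsWord.labels_and_state_of_const (hb : ∀ a ∈ w, a.2 = b)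
    (hW : ∀ j < w.length, W j = !b) (h : SeatsWord σ W w) :
    w.map (fun a => σ a.1) = List.range w.length ∧
      ∀ j, stateAfter σ W w j = if j < w.length then b else W j := by
  induction w using List.reverseRecOn with
  | nil => simp [stateAfter]
  | append_singleton w a ih =>
    obtain ⟨hw, ha⟩ := seatsWord_append.1 h
    obtain ⟨labels, state⟩ := ih (fun c hc => hb c (by simp [hc]))
      (fun j hj => hW j (by simp; omega)) hw
    have hab : a.2 = b := hb a (by simp)
    have seat : σ a.1 = w.length := by
      refine ha.1.unique ⟨?_, fun j hj => ?_⟩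
      · rw [state, if_neg (lt_irrefl _), hab, hW _ (by simp)]
      · rw [state, if_pos hj, hab]
    refine ⟨by simp [labels, seat, List.range_succ], fun j => ?_⟩
    simp only [stateAfter_append, List.length_append, List.length_singleton]
    simp only [stateAfter, List.foldl_cons, List.foldl_nil, Function.update_apply, seat, hab]
    rcases lt_trichotomy j w.length with hj | rfl | hj
    · rw [if_neg hj.ne, if_pos (by omega)]
      exact (state j).trans (if_pos hj)
    · simp
    · rw [if_neg hj.ne', if_neg (by omega)]
      exact (state j).trans (if_neg (by omega))

/-- The words of `R` have the shape of the successive maximal runs of a word. -/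
structure AlternatingRuns (R : List (List (ℤ × Bool))) : Prop where
  ne_nil : ∀ r ∈ R, r ≠ []
  const : ∀ r ∈ R, ∀ a ∈ r, ∀ a' ∈ r, a.2 = a'.2
  alternate : R.IsChain fun r r' => ∀ a ∈ r, ∀ a' ∈ r', a'.2 = !a.2

theorem AlternatingRuns.of_append_left {R' : List (List (ℤ × Bool))}
    (h : AlternatingRuns (R ++ R')) : AlternatingRuns R where
  ne_nil r hr := h.ne_nil r (List.mem_append_left _ hr)
  const r hr := h.const r (List.mem_append_left _ hr)
  alternate := h.alternate.left_of_append

theorem flatten_runsOf (w : List (ℤ × Bool)) : (runsOf w).flatten = w := by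
  induction w with
  | nil => rfl
  | cons a w ih =>
    rw [runsOf]
    split
    · simp_all
    · split_ifs <;> simp_all

theorem alternatingRuns_runsOf (w : List (ℤ × Bool)) : AlternatingRuns (runsOf w) := by
  induction w with
  | nil => exact ⟨by simp [runsOf], by simp [runsOf], by simp [runsOf]⟩
  | cons a w ih =>
    rw [runsOf]
    split
    · exact ⟨by simp, by simp +contextual, by simp⟩
    · rename_i r rs h
      obtain ⟨ne, const, alternate⟩ := h ▸ ih
      obtain ⟨d, r', rfl⟩ := List.exists_cons_of_ne_nil (ne r (by simp))
      have letter : ∀ c ∈ d :: r', c.2 = d.2 := fun c hc =>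
        const _ (by simp) c hc d (by simp)
      split_ifs with hd
      · replace hd : d.2 = a.2 := by simpa using hd
        have letter' : ∀ c ∈ a :: d :: r', c.2 = d.2 := by simpa [hd] using letter
        refine ⟨by simpa using fun r hr => ne r (by simp [hr]), ?_, ?_⟩
        · rintro r hr c hc c' hc'
          rcases List.mem_cons.1 hr with rfl | hr
          · exact (letter' c hc).trans (letter' c' hc').symm
          · exact const r (by simp [hr]) c hc c' hc'
        · rw [List.isChain_cons] at alternate ⊢
          exact ⟨fun r hr c hc c' hc' => by
            rw [alternate.1 r hr d (by simp) c' hc', letter' c hc], alternate.2⟩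
      · replace hd : d.2 = !a.2 := by simpa [Bool.eq_not] using hd
        refine ⟨by simpa using ne, ?_, List.isChain_cons.2 ⟨?_, alternate⟩⟩
        · rintro r hr
          rcases List.mem_cons.1 hr with rfl | hr
          · simp
          · exact const r hr
        · rintro r hr c hc c' hc'
          obtain rfl : d :: r' = r := by simpa using hr
          obtain rfl : c = a := by simpa using hc
          exact (letter c' hc').trans hd

theorem exists_runs_of_findSoliton_eq_some (h : findSoliton R = some s) :
    ∃ R₀ r₁ r₂ R₁, R = R₀ ++ r₁ :: r₂ :: R₁ ∧ s = r₁ ++ r₂.take r₁.length ∧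
      r₁.length ≤ r₂.length ∧ (R₀ ++ [r₁]).IsChain fun r r' => r'.length < r.length := by
  induction R using findSoliton.induct with
  | case1 r₁ r₂ R hle =>
    rw [findSoliton, if_pos hle, Option.some.injEq] at h
    exact ⟨[], r₁, r₂, R, rfl, h.symm, hle, by simp⟩
  | case2 r₁ r₂ R hle ih =>
    rw [findSoliton, if_neg hle] at h
    obtain ⟨R₀, q₁, q₂, R₁, e, hs, hq, hc⟩ := ih h
    refine ⟨r₁ :: R₀, q₁, q₂, R₁, by rw [e, List.cons_append], hs, hq, ?_⟩
    refine List.isChain_cons.2 ⟨fun r hr => ?_, hc⟩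
    obtain rfl : r₂ = r := by cases R₀ <;> simp_all
    omega
  | case3 => simp_all [findSoliton]

theorem isChain_of_findSoliton_eq_none (h : findSoliton R = none) :
    R.IsChain fun r r' => r'.length < r.length := by
  induction R using findSoliton.induct with
  | case1 r₁ r₂ R hle => simp [findSoliton, hle] at h
  | case2 r₁ r₂ R hle ih =>
    rw [findSoliton, if_neg hle] at h
    exact (ih h).cons_cons (by omega)
  | case3 R hR =>
    match R with
    | [] => simp
    | [_] => simp
    | r₁ :: r₂ :: R => exact (hR r₁ r₂ R rfl).elim

theorem AlternatingRuns.state_before {r : List (ℤ × Bool)} (h : AlternatingRuns (R ++ [r]))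
    (hdec : (R ++ [r]).IsChain fun r r' => r'.length < r.length)
    (hσ : SeatsWord σ (fun _ => false) (R ++ [r]).flatten) :
    ∀ a ∈ r, ∀ j < r.length, stateAfter σ (fun _ => false) R.flatten j = !a.2 := by
  induction R using List.reverseRecOn generalizing r with
  | nil =>
    intro a ha j _
    obtain ⟨d, r', rfl⟩ := List.exists_cons_of_ne_nil (h.ne_nil r (by simp))
    have hd : false = !d.2 := hσ.1.1
    rw [h.const _ (List.mem_singleton_self _) a ha d (by simp), ← hd]
    rfl
  | append_singleton R r' ih =>
    intro a ha j hj
    obtain ⟨a', ha'⟩ := List.exists_mem_of_ne_nil r' (h.ne_nil r' (by simp))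
    have link : ([r', r] : List _).IsChain _ :=
      (List.append_assoc R [r'] [r] ▸ hdec).right_of_append
    have link' : ([r', r] : List _).IsChain _ :=
      (List.append_assoc R [r'] [r] ▸ h.alternate).right_of_append
    rw [List.isChain_pair] at link link'
    have hσ' := (seatsWord_append.1 (List.flatten_append ▸ hσ)).1
    have run := SeatsWord.labels_and_state_of_const (b := a'.2)
      (fun c hc => h.const r' (by simp) c hc a' ha')
      (ih h.of_append_left hdec.left_of_append hσ' a' ha')
      (by simpa using (seatsWord_append.1 (by simpa using hσ')).2)
    rw [List.flatten_append, stateAfter_append, link' a' ha' a ha, Bool.not_not]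
    simpa [hj.trans link] using run.2 j

theorem AlternatingRuns.labels_and_state {r : List (ℤ × Bool)} (h : AlternatingRuns (R ++ [r]))
    (hdec : (R ++ [r]).IsChain fun r r' => r'.length < r.length)
    (hσ : SeatsWord σ (fun _ => false) (R ++ [r]).flatten) {a : ℤ × Bool} (ha : a ∈ r) :
    r.map (fun a => σ a.1) = List.range r.length ∧
      ∀ j, stateAfter σ (fun _ => false) (R ++ [r]).flatten j =
        if j < r.length then a.2 else stateAfter σ (fun _ => false) R.flatten j := by
  have hr : SeatsWord σ (stateAfter σ (fun _ => false) R.flatten) r :=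
    (seatsWord_append.1 (by simpa using hσ)).2
  simpa [stateAfter_append] using hr.labels_and_state_of_const
    (fun c hc => h.const r (by simp) c hc a ha) (h.state_before hdec hσ a ha)

theorem AlternatingRuns.length_le_of_getLast? {r : List (ℤ × Bool)}
    (h : AlternatingRuns (R ++ [r]))
    (hdec : (R ++ [r]).IsChain fun r r' => r'.length < r.length)
    (hσ : SeatsWord σ (fun _ => false) R.flatten) {z : ℤ × Bool}
    (hz : z ∈ R.flatten.getLast?) : r.length ≤ σ z.1 := by
  rcases List.eq_nil_or_concat R with rfl | ⟨R, r', rfl⟩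
  · simp at hz
  rw [List.concat_eq_append] at *
  have hr' : r' ≠ [] := h.ne_nil r' (by simp)
  have shorter : r.length < r'.length := by
    have link : ([r', r] : List _).IsChain _ :=
      (List.append_assoc R [r'] [r] ▸ hdec).right_of_append
    rwa [List.isChain_pair] at link
  have hz' : r'.getLast? = some z := by
    simpa [List.getLast?_append, List.getLast?_eq_some_getLast hr'] using hz
  have labels := (h.of_append_left.labels_and_state hdec.left_of_append hσ
    (List.mem_of_getLast? hz')).1
  have := congrArg List.getLast? labels
  rw [List.getLast?_map, hz', List.getLast?_range, if_neg (by omega)] at this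
  simp only [Option.map_some, Option.some.injEq] at this
  omega

/-- The word `s` is a `k`-soliton all of whose letters sit where the carrier puts them: its two
halves are monochromatic of opposite colours and use the seats `0, …, k - 1` in this order. -/
def IsSolitonWord (σ : ℤ → ℕ) (s : List (ℤ × Bool)) (k : ℕ) : Prop :=
  1 ≤ k ∧ ∃ (A B : List (ℤ × Bool)) (c : Bool), s = A ++ B ∧
    (∀ a ∈ A, a.2 = c) ∧ (∀ a ∈ B, a.2 = !c) ∧
    A.map (fun a => σ a.1) = List.range k ∧ B.map (fun a => σ a.1) = List.range k

theorem exists_split_of_findSoliton_eq_some (hσ : SeatsWord σ (fun _ => false) w)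
    (hf : findSoliton (runsOf w) = some s) :
    ∃ u v k, w = u ++ (s ++ v) ∧ IsSolitonWord σ s k ∧
      stateAfter σ (fun _ => false) (u ++ s) = stateAfter σ (fun _ => false) u ∧
      ∀ z ∈ u.getLast?, k ≤ σ z.1 := by
  obtain ⟨R₀, r₁, r₂, R₁, hR, rfl, hle, hdec⟩ := exists_runs_of_findSoliton_eq_some hf
  have runs : AlternatingRuns (R₀ ++ [r₁] ++ (r₂ :: R₁)) := by
    simpa [hR] using alternatingRuns_runsOf w
  have flat : w = R₀.flatten ++ (r₁ ++ (r₂.take r₁.length ++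
      (r₂.drop r₁.length ++ R₁.flatten))) := by
    rw [← List.append_assoc (r₂.take _), List.take_append_drop, ← flatten_runsOf w, hR]
    simp
  have hpos : 1 ≤ r₁.length := List.length_pos_iff.2 (runs.ne_nil r₁ (by simp))
  obtain ⟨a, ha⟩ := List.exists_mem_of_length_pos hpos
  have letter₁ : ∀ d ∈ r₁, d.2 = a.2 := fun d hd => runs.const r₁ (by simp) d hd a ha
  have letter₂ : ∀ d ∈ r₂.take r₁.length, d.2 = !a.2 := by
    have link := (List.append_assoc R₀ [r₁] (r₂ :: R₁) ▸ runs.alternate).right_of_append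
    exact fun d hd => (List.isChain_cons_cons.1 link).1 a ha d (List.mem_of_mem_take hd)
  rw [flat, seatsWord_append, seatsWord_append, seatsWord_append] at hσ
  obtain ⟨hσ₀, hσ₁, hσ₂, -⟩ := hσ
  have before := runs.of_append_left.state_before hdec
    (by simpa [seatsWord_append] using ⟨hσ₀, hσ₁⟩) a ha
  have run₁ := hσ₁.labels_and_state_of_const letter₁ before
  have hlen : (r₂.take r₁.length).length = r₁.length := by simp [hle]
  have run₂ := hσ₂.labels_and_state_of_const letter₂ fun j hj => by
    rw [run₁.2, if_pos (hlen ▸ hj), Bool.not_not]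
  refine ⟨R₀.flatten, _, r₁.length, by rw [flat, List.append_assoc], ⟨hpos, r₁, _, a.2, rfl,
    letter₁, letter₂, run₁.1, by rw [run₂.1, hlen]⟩, ?_, ?_⟩
  · rw [stateAfter_append, stateAfter_append]
    funext j
    rw [run₂.2, run₁.2, hlen]
    split_ifs with hj
    · exact (before j hj).symm
    · rfl
  · exact fun z hz => runs.of_append_left.length_le_of_getLast? hdec hσ₀ hz

theorem exists_stateAfter_of_findSoliton_eq_none (hw : w ≠ [])
    (hσ : SeatsWord σ (fun _ => false) w) (hf : findSoliton (runsOf w) = none) :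
    ∃ j, stateAfter σ (fun _ => false) w j = true := by
  have runs := alternatingRuns_runsOf w
  have flat := flatten_runsOf w
  have hdec := isChain_of_findSoliton_eq_none hf
  rcases List.eq_nil_or_concat (runsOf w) with hR | ⟨R, r, hR⟩
  · exact absurd (by simpa [hR] using flat.symm) hw
  rw [List.concat_eq_append] at hR
  rw [hR] at runs flat hdec
  rw [← flat] at hσ ⊢
  obtain ⟨a, ha⟩ := List.exists_mem_of_ne_nil r (runs.ne_nil r (by simp))
  have hpos := List.length_pos_of_mem ha
  have before := runs.state_before hdec hσ a ha 0 hpos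
  have final := (runs.labels_and_state hdec hσ ha).2
  -- The last run of balls leaves a ball behind: it is the last run, or it is longer than the last.
  cases hc : a.2
  · rcases List.eq_nil_or_concat R with rfl | ⟨R', r', rfl⟩
    · simp [stateAfter, hc] at before
    rw [List.concat_eq_append] at *
    obtain ⟨a', ha'⟩ := List.exists_mem_of_ne_nil r' (runs.ne_nil r' (by simp))
    have link : ([r', r] : List _).IsChain _ :=
      (List.append_assoc R' [r'] [r] ▸ hdec).right_of_append
    rw [List.isChain_pair] at link
    have final' := (runs.of_append_left.labels_and_state hdec.left_of_append
      (seatsWord_append.1 (List.flatten_append ▸ hσ)).1 ha').2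
    rw [final', if_pos (by omega), hc] at before
    exact ⟨r.length, by rw [final, if_neg (lt_irrefl _), final', if_pos link, before]; rfl⟩
  · exact ⟨0, by rw [final, if_pos hpos, hc]⟩

theorem IsSolitonWord.length_eq (h : IsSolitonWord σ s k) : s.length = 2 * k := by
  obtain ⟨-, A, B, c, rfl, -, -, hA, hB⟩ := h
  have lenA := congrArg List.length hA
  have lenB := congrArg List.length hB
  simp only [List.length_map, List.length_range] at lenA lenB
  rw [List.length_append]
  omega

theorem IsSolitonWord.label_lt (h : IsSolitonWord σ s k) {a : ℤ × Bool} (ha : a ∈ s) :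
    σ a.1 < k := by
  obtain ⟨-, A, B, c, rfl, -, -, hA, hB⟩ := h
  have labels : (A ++ B).map (fun a => σ a.1) = List.range k ++ List.range k := by
    rw [List.map_append, hA, hB]
  have := labels ▸ List.mem_map_of_mem (f := fun a : ℤ × Bool => σ a.1) ha
  simpa using this

theorem IsSolitonWord.exists_mem (h : IsSolitonWord σ s k) (b : Bool) {j : ℕ} (hj : j < k) :
    ∃ a ∈ s, a.2 = b ∧ σ a.1 = j := by
  obtain ⟨-, A, B, c, rfl, hA, hB, hσA, hσB⟩ := h
  have hj' : j ∈ List.range k := List.mem_range.2 hj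
  by_cases hb : b = c
  · obtain ⟨a, ha, haj⟩ := List.mem_map.1 (hσA ▸ hj')
    exact ⟨a, List.mem_append_left _ ha, hb ▸ hA a ha, haj⟩
  · obtain ⟨a, ha, haj⟩ := List.mem_map.1 (hσB ▸ hj')
    exact ⟨a, List.mem_append_right _ ha, (hB a ha).trans (Bool.eq_not.2 hb).symm, haj⟩

theorem label_lt_of_map_eq_range (hs : w.Pairwise fun a b => a.1 < b.1)
    (hw : w.map (fun a => σ a.1) = List.range k) {x y : ℤ × Bool} (hx : x ∈ w) (hy : y ∈ w)
    (hxy : x.1 < y.1) : σ x.1 < σ y.1 := by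
  obtain ⟨i, hi, rfl⟩ := List.getElem_of_mem hx
  obtain ⟨j, hj, rfl⟩ := List.getElem_of_mem hy
  have label : ∀ n (hn : n < w.length), σ w[n].1 = n := fun n hn => by
    have := List.getElem_of_eq hw (i := n) (by simpa using hn)
    rwa [List.getElem_map, List.getElem_range] at this
  rw [label, label]
  by_contra! hji
  rcases hji.lt_or_eq with hji | rfl
  · exact lt_asymm hxy (List.pairwise_iff_getElem.1 hs j i hj hi hji)
  · exact lt_irrefl _ hxy

theorem IsSolitonWord.lt_iff (h : IsSolitonWord σ s k) (hs : s.Pairwise fun a b => a.1 < b.1)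
    {x y : ℤ × Bool} (hx : x ∈ s) (hy : y ∈ s) (hxy : x.2 = y.2) :
    x.1 < y.1 ↔ σ x.1 < σ y.1 := by
  obtain ⟨-, A, B, c, rfl, letterA, letterB, hA, hB⟩ := h
  rw [List.pairwise_append] at hs
  have mono : ∀ x ∈ A ++ B, ∀ y ∈ A ++ B, x.2 = y.2 → x.1 < y.1 → σ x.1 < σ y.1 := by
    intro x hx y hy hxy
    rcases List.mem_append.1 hx with hx | hx <;> rcases List.mem_append.1 hy with hy | hy
    · exact label_lt_of_map_eq_range hs.1 hA hx hy
    · simp [letterA x hx, letterB y hy] at hxy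
    · simp [letterB x hx, letterA y hy] at hxy
    · exact label_lt_of_map_eq_range hs.2.1 hB hx hy
  refine ⟨mono x hx y hy hxy, fun hlt => ?_⟩
  rcases lt_trichotomy x.1 y.1 with h | h | h
  · exact h
  · rw [h] at hlt
    exact absurd hlt (lt_irrefl _)
  · exact absurd hlt (mono y hy x hx hxy.symm h).not_gt

theorem IsSolitonWord.not_mem_between (h : IsSolitonWord σ s k)
    (hs : s.Pairwise fun a b => a.1 < b.1) {x y z : ℤ × Bool} (hx : x ∈ s) (hy : y ∈ s)
    (hxy : x.2 = y.2) (hlabel : σ y.1 = σ x.1 + 1) (hxz : x.1 < z.1) (hzy : z.1 < y.1) :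
    z ∉ s := by
  intro hz
  by_cases hzx : x.2 = z.2
  · have := (h.lt_iff hs hx hz hzx).1 hxz
    have := (h.lt_iff hs hz hy (hzx.symm.trans hxy)).1 hzy
    omega
  · obtain ⟨-, A, B, c, rfl, letterA, letterB, -, -⟩ := h
    have hAB := (List.pairwise_append.1 hs).2.2
    rcases List.mem_append.1 hx with hx | hx <;> rcases List.mem_append.1 hz with hz | hz
    · exact hzx ((letterA x hx).trans (letterA z hz).symm)
    · rcases List.mem_append.1 hy with hy | hy
      · exact lt_asymm hzy (hAB y hy z hz)
      · simp [letterA x hx, letterB y hy] at hxy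
    · exact lt_asymm hxz (hAB z hz x hx)
    · exact hzx ((letterB x hx).trans (letterB z hz).symm)

/-- A `k`-soliton `s` of the word `w`, described by the labels of `w`: all labels within the span
of `s` are below `k`, and those between two consecutive equal letters of `s` are below the label
of the first of them. -/
structure IsSolitonIn (σ : ℤ → ℕ) (w s : List (ℤ × Bool)) (k : ℕ) : Prop where
  isSolitonWord : IsSolitonWord σ s k
  sublist : s.Sublist w
  gap : ∀ x ∈ s, ∀ y ∈ s, x.2 = y.2 → σ y.1 = σ x.1 + 1 →
    ∀ z ∈ w, x.1 < z.1 → z.1 < y.1 → σ z.1 < σ x.1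
  hull : ∀ x ∈ s, ∀ y ∈ s, ∀ z ∈ w, x.1 ≤ z.1 → z.1 ≤ y.1 → σ z.1 < k

/-- The words of `S` are solitons of `w` that partition the letters of `w`. -/
structure SolitonDecomposition (σ : ℤ → ℕ) (w : List (ℤ × Bool))
    (S : List (List (ℤ × Bool))) : Prop where
  cover : ∀ a ∈ w, ∃ s ∈ S, a ∈ s
  soliton : ∀ s ∈ S, ∃ k, IsSolitonIn σ w s k
  disjoint : S.Pairwise List.Disjoint

section Insertion

variable (hw : (u ++ (s ++ v)).Pairwise fun a b => a.1 < b.1)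

include hw

theorem mem_of_between {x y z : ℤ × Bool} (hx : x ∈ s) (hy : y ∈ s)
    (hz : z ∈ u ++ (s ++ v)) (hxz : x.1 ≤ z.1) (hzy : z.1 ≤ y.1) : z ∈ s := by
  obtain ⟨-, hsv, hu⟩ := List.pairwise_append.1 hw
  rcases List.mem_append.1 hz with h | h
  · exact absurd (hu z h x (by simp [hx])) hxz.not_gt
  · rcases List.mem_append.1 h with h | h
    · exact h
    · exact absurd ((List.pairwise_append.1 hsv).2.2 y hy z h) hzy.not_gt

theorem IsSolitonWord.isSolitonIn (h : IsSolitonWord σ s k) :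
    IsSolitonIn σ (u ++ (s ++ v)) s k where
  isSolitonWord := h
  sublist := (List.sublist_append_left _ _).trans (List.sublist_append_right _ _)
  gap x hx y hy hxy hlabel z hz hxz hzy := by
    have hs := (List.pairwise_append.1 (List.pairwise_append.1 hw).2.1).1
    exact absurd (mem_of_between hw hx hy hz hxz.le hzy.le)
      (h.not_mem_between hs hx hy hxy hlabel hxz hzy)
  hull x hx y hy z hz hxz hzy := h.label_lt (mem_of_between hw hx hy hz hxz hzy)

theorem disjoint_append_of_pairwise_lt : List.Disjoint s (u ++ v) := by
  obtain ⟨-, hsv, hu⟩ := List.pairwise_append.1 hw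
  intro a has ha
  rcases List.mem_append.1 ha with h | h
  · exact lt_irrefl _ (hu a h a (by simp [has]))
  · exact lt_irrefl _ ((List.pairwise_append.1 hsv).2.2 a has a h)

theorem filter_not_mem_eq :
    (u ++ (s ++ v)).filter (fun a => !((s.map Prod.fst).contains a.1)) = u ++ v := by
  obtain ⟨-, hsv, hu⟩ := List.pairwise_append.1 hw
  have keep : ∀ l : List (ℤ × Bool), (∀ a ∈ l, ∀ c ∈ s, c.1 ≠ a.1) →
      l.filter (fun a => !((s.map Prod.fst).contains a.1)) = l := by
    intro l hl
    rw [List.filter_eq_self]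
    intro a ha
    simpa using fun c hc => hl a ha (a.1, c) hc rfl
  have drop : s.filter (fun a => !((s.map Prod.fst).contains a.1)) = [] := by
    rw [List.filter_eq_nil_iff]
    intro a ha
    simpa [-List.mem_map] using List.mem_map_of_mem (f := Prod.fst) ha
  rw [List.filter_append, List.filter_append, drop, List.nil_append,
    keep u fun a ha c hc => (hu a ha c (by simp [hc])).ne',
    keep v fun a ha c hc => ((List.pairwise_append.1 hsv).2.2 c hc a ha).ne]

theorem exists_le_label_of_between (hu : ∀ z ∈ u.getLast?, k ≤ σ z.1) {x y z : ℤ × Bool}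
    (hx : x ∈ u ++ v) (hz : z ∈ s) (hxz : x.1 ≤ z.1) (hzy : z.1 ≤ y.1) :
    ∃ l ∈ u ++ v, x.1 ≤ l.1 ∧ l.1 < y.1 ∧ k ≤ σ l.1 := by
  obtain ⟨hsu, hsv, hlt⟩ := List.pairwise_append.1 hw
  have hxu : x ∈ u := by
    rcases List.mem_append.1 hx with h | h
    · exact h
    · exact absurd ((List.pairwise_append.1 hsv).2.2 z hz x h) hxz.not_gt
  have hne : u ≠ [] := List.ne_nil_of_mem hxu
  have hl := List.getLast_mem hne
  refine ⟨u.getLast hne, by simp, ?_, (hlt _ hl z (by simp [hz])).trans_le hzy,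
    hu _ (List.getLast?_eq_some_getLast hne)⟩
  exact (hsu.imp le_of_lt).rel_getLast hxu

theorem IsSolitonIn.insert (hs : ∀ a ∈ s, σ a.1 < k) (hu : ∀ z ∈ u.getLast?, k ≤ σ z.1)
    {s' : List (ℤ × Bool)} {m : ℕ} (h : IsSolitonIn σ (u ++ v) s' m) :
    IsSolitonIn σ (u ++ (s ++ v)) s' m where
  isSolitonWord := h.isSolitonWord
  sublist := h.sublist.trans ((List.Sublist.refl u).append (List.sublist_append_right s v))
  gap x hx y hy hxy hlabel z hz hxz hzy := by
    by_cases hzs : z ∈ s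
    · obtain ⟨l, hl, hxl, hly, hkl⟩ :=
        exists_le_label_of_between hw hu (h.sublist.subset hx) hzs hxz.le hzy.le
      refine (hs z hzs).trans_le (hkl.trans ?_)
      rcases hxl.lt_or_eq with hxl | hxl
      · exact (h.gap x hx y hy hxy hlabel l hl hxl hly).le
      · rw [hxl]
    · exact h.gap x hx y hy hxy hlabel z (by simp_all) hxz hzy
  hull x hx y hy z hz hxz hzy := by
    by_cases hzs : z ∈ s
    · obtain ⟨l, hl, hxl, hly, hkl⟩ :=
        exists_le_label_of_between hw hu (h.sublist.subset hx) hzs hxz hzy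
      exact (hs z hzs).trans_le (hkl.trans (h.hull x hx y hy l hl hxl hly.le).le)
    · exact h.hull x hx y hy z (by simp_all) hxz hzy

theorem SolitonDecomposition.cons {S : List (List (ℤ × Bool))} (hs : IsSolitonWord σ s k)
    (hu : ∀ z ∈ u.getLast?, k ≤ σ z.1) (h : SolitonDecomposition σ (u ++ v) S) :
    SolitonDecomposition σ (u ++ (s ++ v)) (s :: S) where
  cover a ha := by
    by_cases has : a ∈ s
    · exact ⟨s, by simp, has⟩
    · obtain ⟨s', hs', ha'⟩ := h.cover a (by simp_all)
      exact ⟨s', by simp [hs'], ha'⟩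
  soliton := by
    refine List.forall_mem_cons.2 ⟨⟨k, hs.isSolitonIn hw⟩, fun s' hs' => ?_⟩
    obtain ⟨m, hm⟩ := h.soliton s' hs'
    exact ⟨m, hm.insert hw (fun a => hs.label_lt) hu⟩
  disjoint := by
    refine List.pairwise_cons.2 ⟨fun s' hs' a ha ha' => ?_, h.disjoint⟩
    obtain ⟨m, hm⟩ := h.soliton s' hs'
    exact disjoint_append_of_pairwise_lt hw ha (hm.sublist.subset ha')

end Insertion

theorem solitonDecomposition_tsAux {n : ℕ} (hw : w.Pairwise fun a b => a.1 < b.1)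
    (hσ : SeatsWord σ (fun _ => false) w)
    (hend : stateAfter σ (fun _ => false) w = fun _ => false) (hn : w.length ≤ n) :
    SolitonDecomposition σ w (tsAux n w) := by
  induction n generalizing w with
  | zero =>
    obtain rfl : w = [] := by simpa using hn
    exact ⟨by simp, by simp [tsAux], by simp [tsAux]⟩
  | succ n ih =>
    rw [tsAux]
    cases hf : findSoliton (runsOf w) with
    | none =>
      obtain rfl : w = [] := by
        by_contra hne
        obtain ⟨j, hj⟩ := exists_stateAfter_of_findSoliton_eq_none hne hσ hf
        simp [hend] at hj
      exact ⟨by simp, by simp, by simp⟩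
    | some s =>
      obtain ⟨u, v, k, rfl, hs, hstate, hu⟩ := exists_split_of_findSoliton_eq_some hσ hf
      rw [← List.append_assoc, seatsWord_append, hstate, seatsWord_append] at hσ
      rw [← List.append_assoc, stateAfter_append, hstate, ← stateAfter_append] at hend
      simp only [filter_not_mem_eq hw]
      refine .cons hw hs hu (ih (hw.sublist ?_) (seatsWord_append.2 ⟨hσ.1.1, hσ.2⟩) hend ?_)
      · exact (List.Sublist.refl u).append (List.sublist_append_right s v)
      · have := hs.1
        have := hs.length_eq
        simp only [List.length_append] at hn ⊢
        omega

end Words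

/-! ### Lifts with a drift -/

theorem sum_Icc_eq_sub_of_isLift {η : Cfg} {ξ : ℤ → ℤ} (h : IsLift η ξ) {z x : ℤ}
    (hzx : z ≤ x + 1) : ∑ y ∈ Icc z x, (2 * valZ (η y) - 1) = ξ x - ξ (z - 1) := by
  induction x, (show z - 1 ≤ x by omega) using Int.leInduction with
  | base => simp
  | succ x hx ih =>
    rw [← Finset.insert_Icc_right_eq_Icc_add_one (by omega), sum_insert (by simp),
      ih (by omega), ← h (x + 1), add_sub_cancel_right]
    ring

theorem sum_valR_eq_of_isLift {η : Cfg} {ξ : ℤ → ℤ} (h : IsLift η ξ) {z x : ℤ}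
    (hzx : z ≤ x + 1) :
    2 * ∑ y ∈ Icc z x, valR (η y) - (x + 1 - z : ℝ) = ξ x - ξ (z - 1) := by
  have cast : ∀ b, ((valZ b : ℤ) : ℝ) = valR b := by rintro (_ | _) <;> simp [valZ, valR]
  have count : ((#(Icc z x) : ℤ) : ℝ) = x + 1 - z := by
    rw [Int.card_Icc, Int.toNat_of_nonneg (by omega)]
    push_cast
    rfl
  have hsum := congrArg (Int.cast : ℤ → ℝ) (sum_Icc_eq_sub_of_isLift h hzx)
  rw [← Int.cast_sub (ξ x), ← hsum, ← count, sum_sub_distrib, ← mul_sum]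
  push_cast
  simp only [cast, sum_const, nsmul_eq_mul, mul_one]

theorem isRecord_iff_forall_lt {η : Cfg} {ξ : ℤ → ℤ} (h : IsLift η ξ) {x : ℤ} :
    isRecord η x ↔ ∀ y < x, ξ x < ξ y := by
  have key : ∀ z ≤ x,
      (∑ y ∈ Icc z x, valZ (η y) < ∑ y ∈ Icc z x, (1 - valZ (η y)) ↔ ξ x < ξ (z - 1)) := by
    intro z hz
    have hsum := sum_Icc_eq_sub_of_isLift h (show z ≤ x + 1 by omega)
    have : ∑ y ∈ Icc z x, (2 * valZ (η y) - 1) =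
        ∑ y ∈ Icc z x, valZ (η y) - ∑ y ∈ Icc z x, (1 - valZ (η y)) := by
      rw [← sum_sub_distrib]
      exact sum_congr rfl fun _ _ => by ring
    omega
  refine ⟨fun hx y hy => ?_, fun hx z hz => (key z hz).2 (hx _ (by omega))⟩
  simpa using (key (y + 1) (by omega)).1 (hx (y + 1) (by omega))

theorem eq_add_one_of_isLift {η : Cfg} {ξ : ℤ → ℤ} (h : IsLift η ξ) {x : ℤ} (hx : η x = true) :
    ξ x = ξ (x - 1) + 1 := by
  have := h x
  simp only [hx, valZ, if_true] at this
  omega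

theorem eq_sub_one_of_isLift {η : Cfg} {ξ : ℤ → ℤ} (h : IsLift η ξ) {x : ℤ}
    (hx : η x = false) : ξ x = ξ (x - 1) - 1 := by
  have := h x
  simp only [hx, valZ, Bool.false_eq_true, if_false] at this
  omega

/-- The sites strictly between `y₁` and `y₂` form an excursion of `η`, possibly empty: `y₁` and `y₂`
are consecutive records. -/
structure IsExcursion (η : Cfg) (y₁ y₂ : ℤ) : Prop where
  lt : y₁ < y₂
  isRecord_left : isRecord η y₁
  isRecord_right : isRecord η y₂
  not_isRecord : ∀ z, y₁ < z → z < y₂ → ¬ isRecord η z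

/-- `ξ` is a lift of `η` that is unbounded below and has a linear drift at `-∞`. Unlike the class
of lifts of configurations in `𝒳`, which it contains, this class is visibly preserved by the
box-ball dynamics. -/
structure IsDriftedLift (η : Cfg) (ξ : ℤ → ℤ) : Prop where
  isLift : IsLift η ξ
  not_bddBelow : ¬ BddBelow (Set.range ξ)
  drift : ∃ c > 0, Tendsto (fun x : ℤ => (ξ x : ℝ) / -x) atBot (nhds c)

namespace IsDriftedLift

variable {η : Cfg} {ξ : ℤ → ℤ} (h : IsDriftedLift η ξ)

include h

theorem tendsto_atBot : Tendsto ξ atBot atTop := by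
  obtain ⟨c, hc, hlim⟩ := h.drift
  have hneg : Tendsto (fun x : ℤ => -(x : ℝ)) atBot atTop :=
    tendsto_neg_atBot_atTop.comp (tendsto_intCast_atBot_iff.2 tendsto_id)
  rw [← tendsto_intCast_atTop_iff (R := ℝ)]
  refine (hlim.pos_mul_atTop hc hneg).congr' ?_
  filter_upwards [eventually_lt_atBot 0] with x hx
  have : (x : ℝ) ≠ 0 := by exact_mod_cast hx.ne
  field_simp

theorem bddBelow_image_Iic (x : ℤ) : BddBelow (ξ '' Set.Iic x) := by
  obtain ⟨N, hN⟩ := eventually_atBot.1 (h.tendsto_atBot.eventually_ge_atTop 0)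
  have far : BddBelow (ξ '' Set.Iic N) := ⟨0, by rintro _ ⟨y, hy, rfl⟩; exact hN y hy⟩
  refine (far.union ((Set.finite_Icc N x).image ξ).bddBelow).mono ?_
  rintro _ ⟨y, hy, rfl⟩
  rcases le_total y N with hyN | hyN
  · exact Or.inl ⟨y, hyN, rfl⟩
  · exact Or.inr ⟨y, ⟨hyN, hy⟩, rfl⟩

theorem runMin_le {x y : ℤ} (hy : y ≤ x) : runMin ξ x ≤ ξ y :=
  csInf_le (h.bddBelow_image_Iic x) ⟨y, hy, rfl⟩

theorem exists_eq_runMin (x : ℤ) : ∃ y ≤ x, ξ y = runMin ξ x :=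
  Int.csInf_mem (s := ξ '' Set.Iic x) ⟨ξ x, x, le_refl x, rfl⟩ (h.bddBelow_image_Iic x)

theorem runMin_eq_min (x : ℤ) : runMin ξ x = min (runMin ξ (x - 1)) (ξ x) := by
  refine le_antisymm (le_min ?_ (h.runMin_le le_rfl)) ?_
  · obtain ⟨y, hy, hmin⟩ := h.exists_eq_runMin (x - 1)
    exact hmin ▸ h.runMin_le (by omega)
  · obtain ⟨y, hy, hmin⟩ := h.exists_eq_runMin x
    rw [← hmin]
    rcases hy.lt_or_eq with hy | rfl
    · exact (min_le_left _ _).trans (h.runMin_le (by omega))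
    · exact min_le_right _ _

theorem isRecord_iff_lt_runMin {x : ℤ} : isRecord η x ↔ ξ x < runMin ξ (x - 1) := by
  rw [isRecord_iff_forall_lt h.isLift]
  refine ⟨fun hx => ?_, fun hx y hy => hx.trans_le (h.runMin_le (by omega))⟩
  obtain ⟨y, hy, hmin⟩ := h.exists_eq_runMin (x - 1)
  exact hmin ▸ hx y (by omega)

theorem eq_false_of_isRecord {x : ℤ} (hx : isRecord η x) : η x = false := by
  by_contra hball
  have := (isRecord_iff_forall_lt h.isLift).1 hx (x - 1) (by omega)
  have := eq_add_one_of_isLift h.isLift (eq_true_of_ne_false hball)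
  omega

theorem not_isRecord_of_eq_true {x : ℤ} (hx : η x = true) : ¬ isRecord η x := fun hr => by
  simp [h.eq_false_of_isRecord hr] at hx

theorem isRecord_iff_of_eq_false {x : ℤ} (hx : η x = false) :
    isRecord η x ↔ ξ (x - 1) = runMin ξ (x - 1) := by
  have := h.runMin_le (le_refl (x - 1))
  have := eq_sub_one_of_isLift h.isLift hx
  rw [h.isRecord_iff_lt_runMin]
  omega

theorem exists_first_passage (c : ℤ) : ∃ x, ξ x = c ∧ isRecord η x ∧ ∀ y < x, c < ξ y := by
  obtain ⟨_, ⟨z, rfl⟩, hz⟩ := not_bddBelow_iff.1 h.not_bddBelow c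
  obtain ⟨N, hN⟩ := eventually_atBot.1 (h.tendsto_atBot.eventually_gt_atTop c)
  obtain ⟨x, hx, hmin⟩ := Int.exists_least_of_bdd (P := fun y => ξ y ≤ c)
    ⟨N, fun y hy => le_of_not_ge fun hyN => (hN y hyN).not_ge hy⟩ ⟨z, hz.le⟩
  have before : ∀ y < x, c < ξ y := fun y hy => lt_of_not_ge fun hyc => (hmin y hyc).not_gt hy
  have hxc : ξ x = c := by
    have := before (x - 1) (by omega)
    cases hb : η x
    · have := eq_sub_one_of_isLift h.isLift hb
      omega
    · have := eq_add_one_of_isLift h.isLift hb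
      omega
  exact ⟨x, hxc, (isRecord_iff_forall_lt h.isLift).2 (hxc ▸ before), before⟩

theorem recPos_spec (j : ℤ) :
    ξ (recPos ξ j) = -j ∧ isRecord η (recPos ξ j) ∧ ∀ y < recPos ξ j, -j < ξ y := by
  obtain ⟨x, hx, hrec, before⟩ := h.exists_first_passage (-j)
  have : IsLeast {x : ℤ | ξ x = -j} x :=
    ⟨hx, fun y (hy : ξ y = -j) => le_of_not_gt fun hlt => (before y hlt).ne' hy⟩
  rw [show recPos ξ j = x from this.csInf_eq]
  exact ⟨hx, hrec, before⟩

theorem isRecord_recPos (j : ℤ) : isRecord η (recPos ξ j) := (h.recPos_spec j).2.1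

theorem exists_isRecord_le (a : ℤ) : ∃ x ≤ a, isRecord η x := by
  obtain ⟨x, -, hrec, before⟩ := h.exists_first_passage (ξ a)
  exact ⟨x, le_of_not_gt fun hlt => lt_irrefl _ (before a hlt), hrec⟩

theorem exists_isRecord_ge (a : ℤ) : ∃ x, a ≤ x ∧ isRecord η x := by
  obtain ⟨x, hx, hrec, -⟩ := h.exists_first_passage (runMin ξ a - 1)
  refine ⟨x, le_of_not_gt fun hlt => ?_, hrec⟩
  have := h.runMin_le hlt.le
  omega

/-- Going right from a site, the previous record is reached after finitely many steps to the
left. -/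
theorem record_induction {P : ℤ → Prop} (record : ∀ x, isRecord η x → P x)
    (step : ∀ x, ¬ isRecord η x → P (x - 1) → P x) (x : ℤ) : P x := by
  obtain ⟨a, hax, ha⟩ := h.exists_isRecord_le x
  induction x, hax using Int.leInduction with
  | base => exact record a ha
  | succ x _ ih =>
    by_cases hx : isRecord η (x + 1)
    · exact record _ hx
    · exact step _ hx (by simpa using ih)

theorem exists_isExcursion {x : ℤ} (hx : ¬ isRecord η x) :
    ∃ y₁ y₂ : ℤ, IsExcursion η y₁ y₂ ∧ y₁ < x ∧ x < y₂ := by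
  obtain ⟨a, hax, ha⟩ := h.exists_isRecord_le x
  obtain ⟨b, hxb, hb⟩ := h.exists_isRecord_ge x
  obtain ⟨y₁, ⟨hy₁, hr₁⟩, greatest⟩ :=
    Int.exists_greatest_of_bdd (P := fun z => z ≤ x ∧ isRecord η z) ⟨x, fun z hz => hz.1⟩
      ⟨a, hax, ha⟩
  obtain ⟨y₂, ⟨hy₂, hr₂⟩, least⟩ :=
    Int.exists_least_of_bdd (P := fun z => x ≤ z ∧ isRecord η z) ⟨x, fun z hz => hz.1⟩
      ⟨b, hxb, hb⟩
  have hlt₁ : y₁ < x := hy₁.lt_of_ne (by rintro rfl; exact hx hr₁)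
  have hlt₂ : x < y₂ := hy₂.lt_of_ne (by rintro rfl; exact hx hr₂)
  refine ⟨y₁, y₂, ⟨hlt₁.trans hlt₂, hr₁, hr₂, fun z hz₁ hz₂ hz => ?_⟩, hlt₁, hlt₂⟩
  rcases le_total z x with hzx | hzx
  · exact hz₁.not_ge (greatest z ⟨hzx, hz⟩)
  · exact hz₂.not_ge (least z ⟨hzx, hz⟩)

theorem isLift_liftT : IsLift (bbsT η) (liftT ξ) := by
  intro x
  have := h.runMin_le (le_refl (x - 1))
  have := h.runMin_eq_min x
  simp only [liftT, bbsT]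
  cases hx : η x
  · have := eq_sub_one_of_isLift h.isLift hx
    have := h.isRecord_iff_of_eq_false hx
    by_cases hr : isRecord η x <;> simp [hr, valZ] at * <;> omega
  · have := eq_add_one_of_isLift h.isLift hx
    have hr := h.not_isRecord_of_eq_true hx
    simp only [hr, valZ, if_false, Bool.not_true, Bool.false_eq_true]
    omega

theorem tendsto_runMin_div {c : ℝ} (hc : 0 < c)
    (hlim : Tendsto (fun x : ℤ => (ξ x : ℝ) / -x) atBot (nhds c)) :
    Tendsto (fun x : ℤ => (runMin ξ x : ℝ) / -x) atBot (nhds c) := by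
  refine tendsto_order.2 ⟨fun a hac => ?_, fun a hca => ?_⟩
  · obtain ⟨b, hb, hbc⟩ := exists_between (max_lt hac hc)
    obtain ⟨N, hN⟩ := eventually_atBot.1 ((tendsto_order.1 hlim).1 b hbc)
    filter_upwards [eventually_le_atBot N, eventually_lt_atBot 0] with x hxN hx
    obtain ⟨y, hyx, hmin⟩ := h.exists_eq_runMin x
    have hx' : (0 : ℝ) < -x := by exact_mod_cast neg_pos.2 hx
    have hyx' : (-x : ℝ) ≤ -y := by exact_mod_cast neg_le_neg hyx
    have hy := (lt_div_iff₀ (hx'.trans_le hyx')).1 (hN y (hyx.trans hxN))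
    have hb0 : 0 ≤ b := (le_max_right _ _).trans hb.le
    rw [← hmin]
    exact ((le_max_left _ _).trans_lt hb).trans
      ((lt_div_iff₀ hx').2 ((mul_le_mul_of_nonneg_left hyx' hb0).trans_lt hy))
  · filter_upwards [(tendsto_order.1 hlim).2 a hca, eventually_lt_atBot 0] with x hxa hx
    have hx' : (0 : ℝ) < -x := by exact_mod_cast neg_pos.2 hx
    exact (div_le_div_of_nonneg_right (by exact_mod_cast h.runMin_le le_rfl) hx'.le).trans_lt hxa

theorem liftT_le (x : ℤ) : liftT ξ x ≤ ξ x := by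
  have := h.runMin_le (le_refl x)
  simp only [liftT]
  omega

theorem next : IsDriftedLift (bbsT η) (liftT ξ) where
  isLift := h.isLift_liftT
  not_bddBelow := fun ⟨B, hB⟩ => h.not_bddBelow
    ⟨B, by rintro _ ⟨x, rfl⟩; exact (hB ⟨x, rfl⟩).trans (h.liftT_le x)⟩
  drift := by
    obtain ⟨c, hc, hlim⟩ := h.drift
    refine ⟨c, hc, ?_⟩
    have := ((h.tendsto_runMin_div hc hlim).const_mul 2).sub hlim
    convert this using 2
    · simp only [liftT]
      push_cast
      ring
    · ring

theorem iterate (t : ℕ) : IsDriftedLift (bbsT^[t] η) (liftT^[t] ξ) := by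
  induction t with
  | zero => exact h
  | succ t ih =>
    rw [Function.iterate_succ_apply', Function.iterate_succ_apply']
    exact ih.next

end IsDriftedLift

theorem tendsto_div_neg_of_isLift {η : Cfg} {ξ : ℤ → ℤ} (hξ : IsLift η ξ) {lam : ℝ}
    (hη : Tendsto (fun y : ℕ => (∑ x ∈ Icc (-(y : ℤ)) 0, valR (η x)) / (y : ℝ)) atTop (nhds lam)) :
    Tendsto (fun x : ℤ => (ξ x : ℝ) / -x) atBot (nhds (1 - 2 * lam)) := by
  rw [← map_neg_atTop, ← Nat.map_cast_int_atTop, tendsto_map'_iff, tendsto_map'_iff,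
    ← tendsto_add_atTop_iff_nat 1]
  have hone := tendsto_one_div_add_atTop_nhds_zero_nat (𝕜 := ℝ)
  have hfrac := tendsto_natCast_div_add_atTop (1 : ℝ)
  have := ((hone.const_mul (ξ 0 : ℝ)).add_const 1).sub ((hη.mul hfrac).const_mul 2)
  simp only [mul_zero, zero_add, mul_one] at this
  refine this.congr' ?_
  filter_upwards [eventually_ge_atTop 1] with y hy
  have hsum := sum_valR_eq_of_isLift hξ (z := -y) (x := 0) (by omega)
  have hy' : (y : ℝ) ≠ 0 := by positivity
  have hy'' : (y : ℝ) + 1 ≠ 0 := by positivity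
  have : ((-(y : ℤ) - 1 : ℤ)) = -((y + 1 : ℕ) : ℤ) := by push_cast; ring
  rw [this] at hsum
  simp only [Function.comp_apply]
  push_cast at hsum ⊢
  field_simp
  linarith

theorem tendsto_div_of_isLift {η : Cfg} {ξ : ℤ → ℤ} (hξ : IsLift η ξ) {lam : ℝ}
    (hη : Tendsto (fun y : ℕ => (∑ x ∈ Icc (0 : ℤ) y, valR (η x)) / (y : ℝ)) atTop (nhds lam)) :
    Tendsto (fun y : ℕ => (ξ y : ℝ) / y) atTop (nhds (2 * lam - 1)) := by
  have := ((tendsto_const_div_atTop_nhds_zero_nat (ξ (-1) - 1 : ℝ)).sub_const 1).add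
    (hη.const_mul 2)
  rw [show 2 * lam - 1 = 0 - 1 + 2 * lam by ring]
  refine this.congr' ?_
  filter_upwards [eventually_ge_atTop 1] with y hy
  have hsum := sum_valR_eq_of_isLift hξ (z := 0) (x := y) (by omega)
  have hy' : (y : ℝ) ≠ 0 := by positivity
  push_cast at hsum
  field_simp
  linarith

theorem isDriftedLift_of_inX {η : Cfg} {ξ : ℤ → ℤ} (hη : inX η) (hξ : IsLift η ξ) :
    IsDriftedLift η ξ := by
  obtain ⟨lam, -, hlam, hleft, hright⟩ := hη
  refine ⟨hξ, fun ⟨B, hB⟩ => ?_, 1 - 2 * lam, by linarith, tendsto_div_neg_of_isLift hξ hleft⟩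
  have : (0 : ℝ) ≤ 2 * lam - 1 := by
    refine le_of_tendsto_of_tendsto' (tendsto_const_div_atTop_nhds_zero_nat (B : ℝ))
      (tendsto_div_of_isLift hξ hright) fun y => ?_
    gcongr
    exact_mod_cast hB ⟨y, rfl⟩
  linarith

/-! ### The carrier with numbered seats -/

/-- The seat of a carrier with set `A` of occupied seats that is used next: the lowest free seat if
a ball is picked up (`b = true`), the lowest occupied one if a ball is put down (`b = false`). -/
noncomputable def seat (b : Bool) (A : Finset ℕ) : ℕ := sInf {j | decide (j ∈ A) = !b}

/-- The occupied seats after a ball has been picked up or put down at `seat b A`. -/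
noncomputable def carrierStep (b : Bool) (A : Finset ℕ) : Finset ℕ :=
  if b then insert (seat b A) A else A.erase (seat b A)

/-- The occupied seats of a carrier that starts empty at `a` and has crossed `n` boxes. -/
noncomputable def carrierFrom (η : Cfg) (a : ℤ) : ℕ → Finset ℕ
  | 0 => ∅
  | n + 1 => carrierStep (η (a + n + 1)) (carrierFrom η a n)

/-- The last record of `η` up to `x`; meaningful only if there is one. -/
noncomputable def lastRecord (η : Cfg) (x : ℤ) : ℤ := sSup {a | a ≤ x ∧ isRecord η a}

/-- The occupied seats of the carrier after it has crossed the box `x`. The carrier is empty at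
every record, so it suffices to follow it from the last one. -/
noncomputable def carrier (η : Cfg) (x : ℤ) : Finset ℕ :=
  carrierFrom η (lastRecord η x) (x - lastRecord η x).toNat

/-- The seat used by the carrier at the box `x`. Away from the records this is the slot level
`Sξ(x)` of the paper. -/
noncomputable def seatLevel (η : Cfg) (x : ℤ) : ℕ := seat (η x) (carrier η (x - 1))

theorem isSeat_seat {b : Bool} {A : Finset ℕ} (hA : b = false → A.Nonempty) :
    IsSeat (fun j => decide (j ∈ A)) b (seat b A) := by
  have hne : {j | decide (j ∈ A) = !b}.Nonempty := by
    cases b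
    · simpa [Set.Nonempty, Finset.Nonempty] using hA
    · simpa [Set.Nonempty] using Infinite.exists_notMem_finset A
  exact ⟨Nat.sInf_mem hne, fun j hj => by simpa using Nat.notMem_of_lt_sInf hj⟩

theorem isSeat_true_iff {A : Finset ℕ} {s : ℕ} :
    IsSeat (fun j => decide (j ∈ A)) true s ↔ s ∉ A ∧ ∀ j < s, j ∈ A := by
  simp [IsSeat]

theorem isSeat_false_iff {A : Finset ℕ} {s : ℕ} :
    IsSeat (fun j => decide (j ∈ A)) false s ↔ s ∈ A ∧ ∀ j < s, j ∉ A := by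
  simp [IsSeat]

theorem decide_mem_carrierStep (b : Bool) (A : Finset ℕ) :
    (fun j => decide (j ∈ carrierStep b A)) =
      Function.update (fun j => decide (j ∈ A)) (seat b A) b := by
  funext j
  by_cases hj : j = seat b A <;> cases b <;> simp [carrierStep, hj]

theorem lastRecord_of_isRecord {η : Cfg} {x : ℤ} (hx : isRecord η x) : lastRecord η x = x :=
  IsGreatest.csSup_eq ⟨⟨le_rfl, hx⟩, fun _ ha => ha.1⟩

theorem lastRecord_of_not_isRecord {η : Cfg} {x : ℤ} (hx : ¬ isRecord η x) :
    lastRecord η x = lastRecord η (x - 1) := by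
  unfold lastRecord
  congr 1
  ext a
  refine and_congr_left fun ha => ⟨fun hax => ?_, fun hax => by omega⟩
  have : a ≠ x := by
    rintro rfl
    exact hx ha
  omega

theorem carrier_of_isRecord {η : Cfg} {x : ℤ} (hx : isRecord η x) : carrier η x = ∅ := by
  simp [carrier, lastRecord_of_isRecord hx, carrierFrom]

namespace IsDriftedLift

variable {η : Cfg} {ξ : ℤ → ℤ} (h : IsDriftedLift η ξ) {x : ℤ}

include h

theorem lastRecord_le (x : ℤ) : lastRecord η x ≤ x :=
  csSup_le (h.exists_isRecord_le x) fun _ ha => ha.1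

theorem carrier_of_not_isRecord (hx : ¬ isRecord η x) :
    carrier η x = carrierStep (η x) (carrier η (x - 1)) := by
  have hle := h.lastRecord_le (x - 1)
  rw [carrier, carrier, lastRecord_of_not_isRecord hx,
    show (x - lastRecord η (x - 1)).toNat = (x - 1 - lastRecord η (x - 1)).toNat + 1 by omega,
    carrierFrom,
    show lastRecord η (x - 1) + ((x - 1 - lastRecord η (x - 1)).toNat : ℤ) + 1 = x by omega]

theorem card_carrier (x : ℤ) : (#(carrier η x) : ℤ) = ξ x - runMin ξ x := by
  induction x using h.record_induction with
  | record x hx =>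
    have := h.runMin_eq_min x
    have := h.isRecord_iff_lt_runMin.1 hx
    rw [carrier_of_isRecord hx, card_empty]
    omega
  | step x hx ih =>
    have hmin := h.runMin_eq_min x
    have hnot := mt h.isRecord_iff_lt_runMin.2 hx
    rw [h.carrier_of_not_isRecord hx]
    cases hb : η x
    · have hstep := eq_sub_one_of_isLift h.isLift hb
      have hne : (carrier η (x - 1)).Nonempty := card_pos.1 (by omega)
      simp only [carrierStep, Bool.false_eq_true, if_false]
      rw [cast_card_erase_of_mem (isSeat_false_iff.1 (isSeat_seat fun _ => hne)).1]
      omega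
    · have hstep := eq_add_one_of_isLift h.isLift hb
      simp only [carrierStep, if_true]
      rw [card_insert_of_notMem (isSeat_true_iff.1 (isSeat_seat (by simp))).1]
      omega

theorem carrier_sub_one_of_isRecord (hx : isRecord η x) : carrier η (x - 1) = ∅ := by
  have := h.card_carrier (x - 1)
  have := (h.isRecord_iff_of_eq_false (h.eq_false_of_isRecord hx)).1 hx
  exact card_eq_zero.1 (by omega)

theorem isSeat_seatLevel (hx : ¬ isRecord η x) :
    IsSeat (fun j => decide (j ∈ carrier η (x - 1))) (η x) (seatLevel η x) := by
  refine isSeat_seat fun hb => card_pos.1 ?_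
  have := h.card_carrier (x - 1)
  have := h.runMin_le (le_refl (x - 1))
  have := mt (h.isRecord_iff_of_eq_false hb).2 hx
  omega

theorem decide_mem_carrier (hx : ¬ isRecord η x) :
    (fun j => decide (j ∈ carrier η x)) =
      Function.update (fun j => decide (j ∈ carrier η (x - 1))) (seatLevel η x) (η x) := by
  rw [h.carrier_of_not_isRecord hx, decide_mem_carrierStep]
  rfl

theorem seatLevel_of_eq_true (hx : η x = true) :
    seatLevel η x ∉ carrier η (x - 1) ∧ ∀ j < seatLevel η x, j ∈ carrier η (x - 1) :=
  isSeat_true_iff.1 (hx ▸ h.isSeat_seatLevel (h.not_isRecord_of_eq_true hx))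

theorem seatLevel_of_eq_false (hx : η x = false) (hr : ¬ isRecord η x) :
    seatLevel η x ∈ carrier η (x - 1) ∧ ∀ j < seatLevel η x, j ∉ carrier η (x - 1) :=
  isSeat_false_iff.1 (hx ▸ h.isSeat_seatLevel hr)

theorem carrier_of_eq_true (hx : η x = true) :
    carrier η x = insert (seatLevel η x) (carrier η (x - 1)) := by
  rw [h.carrier_of_not_isRecord (h.not_isRecord_of_eq_true hx), seatLevel, hx]
  rfl

theorem carrier_of_eq_false (hx : η x = false) (hr : ¬ isRecord η x) :
    carrier η x = (carrier η (x - 1)).erase (seatLevel η x) := by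
  rw [h.carrier_of_not_isRecord hr, seatLevel, hx]
  rfl

end IsDriftedLift

/-! ### Solitons and slot levels -/

theorem excursionWord_eq_map (η : Cfg) (y₁ y₂ : ℤ) : excursionWord η y₁ y₂ =
    (List.range (y₂ - y₁ - 1).toNat).map fun n : ℕ => (y₁ + 1 + (n : ℤ), η (y₁ + 1 + n)) := by
  have cast : (do let a ← List.range (y₂ - y₁ - 1).toNat; pure (a : ℤ)) =
      (List.range (y₂ - y₁ - 1).toNat).map (fun n : ℕ => (n : ℤ)) := by
    rw [List.map_eq_flatMap]
    rfl
  rw [excursionWord, cast, List.map_map]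
  rfl

theorem mem_excursionWord {η : Cfg} {y₁ y₂ : ℤ} {a : ℤ × Bool} :
    a ∈ excursionWord η y₁ y₂ ↔ y₁ < a.1 ∧ a.1 < y₂ ∧ η a.1 = a.2 := by
  rw [excursionWord_eq_map, List.mem_map]
  simp only [List.mem_range]
  constructor
  · rintro ⟨n, hn, rfl⟩
    exact ⟨by dsimp only; omega, by dsimp only; omega, rfl⟩
  · rintro ⟨hy₁, hy₂, hletter⟩
    refine ⟨(a.1 - y₁ - 1).toNat, by omega, ?_⟩
    rw [show y₁ + 1 + ((a.1 - y₁ - 1).toNat : ℤ) = a.1 by omega, hletter]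

theorem pairwise_lt_excursionWord (η : Cfg) (y₁ y₂ : ℤ) :
    (excursionWord η y₁ y₂).Pairwise fun a b => a.1 < b.1 := by
  rw [excursionWord_eq_map, List.pairwise_map]
  exact List.pairwise_lt_range.imp fun hab => by dsimp only; omega

theorem IsExcursion.eq_of_mem {η : Cfg} {y₁ y₂ y₁' y₂' x : ℤ} (h : IsExcursion η y₁ y₂)
    (h' : IsExcursion η y₁' y₂') (hx : y₁ < x ∧ x < y₂) (hx' : y₁' < x ∧ x < y₂') :
    y₁ = y₁' ∧ y₂ = y₂' := by
  have left : ¬ y₁ < y₁' := fun hlt => h.not_isRecord _ hlt (by omega) h'.isRecord_left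
  have left' : ¬ y₁' < y₁ := fun hlt => h'.not_isRecord _ hlt (by omega) h.isRecord_left
  have right : ¬ y₂' < y₂ := fun hlt => h.not_isRecord _ (by omega) hlt h'.isRecord_right
  have right' : ¬ y₂ < y₂' := fun hlt => h'.not_isRecord _ (by omega) hlt h.isRecord_right
  omega

/-- `γ` has the shape of a `k`-soliton of `η`, described through slot levels. All the
Takahashi–Satsuma solitons have this shape, and the dynamics is studied through it alone. -/
structure IsSolitonShape (η : Cfg) (k : ℕ) (γ : Finset ℤ) : Prop where
  one_le : 1 ≤ k
  exists_mem : ∀ b, ∀ j < k, ∃ x ∈ γ, η x = b ∧ seatLevel η x = j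
  lt_iff : ∀ x ∈ γ, ∀ y ∈ γ, η x = η y → (x < y ↔ seatLevel η x < seatLevel η y)
  gap : ∀ x ∈ γ, ∀ y ∈ γ, η x = η y → seatLevel η y = seatLevel η x + 1 →
    ∀ z, x < z → z < y → seatLevel η z < seatLevel η x
  hull : ∀ x ∈ γ, ∀ y ∈ γ, ∀ z, x ≤ z → z ≤ y → ¬ isRecord η z ∧ seatLevel η z < k

namespace IsDriftedLift

variable {η : Cfg} {ξ : ℤ → ℤ} (h : IsDriftedLift η ξ)

include h

theorem seatsWord_and_stateAfter {y : ℤ} (hy : isRecord η y) (n : ℕ)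
    (hn : ∀ z, y < z → z < y + 1 + n → ¬ isRecord η z) :
    let w := (List.range n).map fun i : ℕ => (y + 1 + (i : ℤ), η (y + 1 + i))
    SeatsWord (seatLevel η) (fun _ => false) w ∧
      stateAfter (seatLevel η) (fun _ => false) w = fun j => decide (j ∈ carrier η (y + n)) := by
  induction n with
  | zero => simp [SeatsWord, stateAfter, carrier_of_isRecord hy]
  | succ n ih =>
    obtain ⟨seats, state⟩ := ih fun z hz hz' => hn z hz (by push_cast; omega)
    have hr : ¬ isRecord η (y + 1 + n) := hn _ (by omega) (by push_cast; omega)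
    have hseat := h.isSeat_seatLevel hr
    have hstep := h.decide_mem_carrier hr
    rw [show y + 1 + (n : ℤ) - 1 = y + n by ring] at hseat hstep
    simp only [List.range_succ, List.map_append, List.map_cons, List.map_nil]
    rw [seatsWord_append, stateAfter_append, state,
      show y + ((n + 1 : ℕ) : ℤ) = y + 1 + n by push_cast; ring, hstep]
    exact ⟨⟨seats, hseat, trivial⟩, rfl⟩

theorem solitonDecomposition {y₁ y₂ : ℤ} (hy : IsExcursion η y₁ y₂) :
    SolitonDecomposition (seatLevel η) (excursionWord η y₁ y₂)
      (tsSolitons (excursionWord η y₁ y₂)) := by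
  have hlt := hy.lt
  obtain ⟨seats, state⟩ := h.seatsWord_and_stateAfter hy.isRecord_left (y₂ - y₁ - 1).toNat
    fun z hz hz' => hy.not_isRecord z hz (by omega)
  rw [← excursionWord_eq_map] at seats state
  refine solitonDecomposition_tsAux (pairwise_lt_excursionWord η y₁ y₂) seats ?_ le_rfl
  rw [state, show y₁ + ((y₂ - y₁ - 1).toNat : ℤ) = y₂ - 1 by omega,
    h.carrier_sub_one_of_isRecord hy.isRecord_right]
  simp

theorem isSolitonShape_of_mem_Gamma {k : ℕ} {γ : Finset ℤ} (hγ : γ ∈ Gamma η k) :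
    IsSolitonShape η k γ := by
  obtain ⟨y₁, y₂, hlt, hr₁, hr₂, hnot, s, hs, hlen, rfl⟩ := hγ
  obtain ⟨m, hm⟩ := (h.solitonDecomposition ⟨hlt, hr₁, hr₂, hnot⟩).soliton s hs
  obtain rfl : m = k := by have := hm.isSolitonWord.length_eq; omega
  have mem_word : ∀ a ∈ s, y₁ < a.1 ∧ a.1 < y₂ ∧ η a.1 = a.2 := fun a ha =>
    mem_excursionWord.1 (hm.sublist.subset ha)
  have mem_iff : ∀ x, x ∈ (s.map Prod.fst).toFinset ↔ (x, η x) ∈ s := fun x => by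
    simp only [List.mem_toFinset, List.mem_map]
    exact ⟨fun ⟨a, ha, hax⟩ => by rw [← hax, (mem_word a ha).2.2]; exact ha,
      fun hx => ⟨_, hx, rfl⟩⟩
  have sorted := (pairwise_lt_excursionWord η y₁ y₂).sublist hm.sublist
  refine ⟨hm.isSolitonWord.1, ?_, ?_, ?_, ?_⟩ <;> simp only [mem_iff]
  · intro b j hj
    obtain ⟨a, ha, rfl, hlevel⟩ := hm.isSolitonWord.exists_mem b hj
    have hletter := (mem_word a ha).2.2
    exact ⟨a.1, hletter ▸ ha, hletter, hlevel⟩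
  · exact fun x hx y hy hxy => hm.isSolitonWord.lt_iff sorted hx hy hxy
  · intro x hx y hy hxy hlevel z hxz hzy
    exact hm.gap _ hx _ hy hxy hlevel (z, η z)
      (mem_excursionWord.2 ⟨(mem_word _ hx).1.trans hxz, hzy.trans (mem_word _ hy).2.1, rfl⟩)
      hxz hzy
  · intro x hx y hy z hxz hzy
    have hz₁ : y₁ < z := (mem_word _ hx).1.trans_le hxz
    have hz₂ : z < y₂ := hzy.trans_lt (mem_word _ hy).2.1
    exact ⟨hnot z hz₁ hz₂,
      hm.hull _ hx _ hy (z, η z) (mem_excursionWord.2 ⟨hz₁, hz₂, rfl⟩) hxz hzy⟩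

theorem exists_mem_Gamma {x : ℤ} (hx : ¬ isRecord η x) : ∃ k, ∃ γ ∈ Gamma η k, x ∈ γ := by
  obtain ⟨y₁, y₂, hy, hx₁, hx₂⟩ := h.exists_isExcursion hx
  have decomposition := h.solitonDecomposition hy
  obtain ⟨s, hs, hxs⟩ := decomposition.cover (x, η x) (mem_excursionWord.2 ⟨hx₁, hx₂, rfl⟩)
  obtain ⟨k, hk⟩ := decomposition.soliton s hs
  exact ⟨k, (s.map Prod.fst).toFinset, ⟨y₁, y₂, hy.lt, hy.isRecord_left, hy.isRecord_right,
    hy.not_isRecord, s, hs, hk.isSolitonWord.length_eq, rfl⟩,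
    List.mem_toFinset.2 (List.mem_map.2 ⟨_, hxs, rfl⟩)⟩

theorem Gamma_eq_of_mem {k k' : ℕ} {γ γ' : Finset ℤ} (hγ : γ ∈ Gamma η k)
    (hγ' : γ' ∈ Gamma η k') {x : ℤ} (hx : x ∈ γ) (hx' : x ∈ γ') : γ = γ' := by
  obtain ⟨y₁, y₂, hlt, hr₁, hr₂, hnot, s, hs, -, rfl⟩ := hγ
  obtain ⟨y₁', y₂', hlt', hr₁', hr₂', hnot', s', hs', -, rfl⟩ := hγ'
  have hy : IsExcursion η y₁ y₂ := ⟨hlt, hr₁, hr₂, hnot⟩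
  have hy' : IsExcursion η y₁' y₂' := ⟨hlt', hr₁', hr₂', hnot'⟩
  have letters {y₁ y₂ : ℤ} (hy : IsExcursion η y₁ y₂) {s : List (ℤ × Bool)}
      (hs : s ∈ tsSolitons (excursionWord η y₁ y₂)) (hx : x ∈ (s.map Prod.fst).toFinset) :
      (x, η x) ∈ s ∧ y₁ < x ∧ x < y₂ := by
    obtain ⟨a, ha, rfl⟩ := List.mem_map.1 (List.mem_toFinset.1 hx)
    obtain ⟨k, hk⟩ := (h.solitonDecomposition hy).soliton s hs
    obtain ⟨hx₁, hx₂, hletter⟩ := mem_excursionWord.1 (hk.sublist.subset ha)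
    exact ⟨hletter ▸ ha, hx₁, hx₂⟩
  obtain ⟨hxs, hxy⟩ := letters hy hs hx
  obtain ⟨hxs', hxy'⟩ := letters hy' hs' hx'
  obtain ⟨rfl, rfl⟩ := hy.eq_of_mem hy' hxy hxy'
  by_contra hne
  have hss : s ≠ s' := fun he => hne (he ▸ rfl)
  have : Std.Symm (List.Disjoint (α := ℤ × Bool)) := ⟨fun _ _ hd => hd.symm⟩
  exact (h.solitonDecomposition hy).disjoint.forall hs hs' hss hxs hxs'

end IsDriftedLift

namespace IsSolitonShape

variable {η : Cfg} {k m : ℕ} {γ : Finset ℤ} (h : IsSolitonShape η k γ)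

include h

theorem not_isRecord {x : ℤ} (hx : x ∈ γ) : ¬ isRecord η x := (h.hull x hx x hx x le_rfl le_rfl).1

theorem seatLevel_lt {x : ℤ} (hx : x ∈ γ) : seatLevel η x < k :=
  (h.hull x hx x hx x le_rfl le_rfl).2

theorem size_unique (h' : IsSolitonShape η m γ) : k = m := by
  have le {k m : ℕ} (h : IsSolitonShape η k γ) (h' : IsSolitonShape η m γ) : k ≤ m := by
    obtain ⟨x, hx, -, hlevel⟩ := h.exists_mem true (k - 1) (by have := h.one_le; omega)
    have := h'.seatLevel_lt hx
    omega
  exact (le h h').antisymm (le h' h)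

theorem eq_of_seatLevel_eq {x y : ℤ} (hx : x ∈ γ) (hy : y ∈ γ) (hxy : η x = η y)
    (hlevel : seatLevel η x = seatLevel η y) : x = y := by
  have := h.lt_iff x hx y hy hxy
  have := h.lt_iff y hy x hx hxy.symm
  omega

theorem bijOn_seatLevel (b : Bool) :
    Set.BijOn (seatLevel η) {y | y ∈ γ ∧ η y = b} (Set.Iio k) :=
  ⟨fun _ hy => h.seatLevel_lt hy.1,
    fun _ hx _ hy hlevel => h.eq_of_seatLevel_eq hx.1 hy.1 (hx.2.trans hy.2.symm) hlevel,
    fun j hj => let ⟨y, hy, hyb, hlevel⟩ := h.exists_mem b j hj; ⟨y, ⟨hy, hyb⟩, hlevel⟩⟩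

theorem card_filter_le {x : ℤ} (hx : x ∈ γ) {b : Bool} (hb : η x = b) :
    #{y ∈ γ.filter (fun y => η y = b) | y ≤ x} = seatLevel η x + 1 := by
  have le_iff : ∀ y ∈ γ, η y = b → (y ≤ x ↔ seatLevel η y ≤ seatLevel η x) := fun y hy hyb => by
    have := h.lt_iff x hx y hy (hb.trans hyb.symm)
    omega
  rw [← card_range (seatLevel η x + 1), ← card_image_of_injOn (f := seatLevel η)]
  · congr 1
    ext j
    simp only [mem_image, mem_filter, mem_range, Nat.lt_succ_iff]
    constructor
    · rintro ⟨y, ⟨⟨hy, hyb⟩, hle⟩, rfl⟩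
      exact (le_iff y hy hyb).1 hle
    · intro hj
      obtain ⟨y, ⟨hy, hyb⟩, rfl⟩ := (h.bijOn_seatLevel b).surjOn (hj.trans_lt (h.seatLevel_lt hx))
      exact ⟨y, ⟨⟨hy, hyb⟩, (le_iff y hy hyb).2 hj⟩, rfl⟩
  · exact (h.bijOn_seatLevel b).injOn.mono fun y hy => by simpa using (mem_filter.1 hy).1

theorem card_filter_eq_and_le_seatLevel (j : ℕ) (b : Bool) :
    #{x ∈ γ | η x = b ∧ j ≤ seatLevel η x} = k - j := by
  rw [← Nat.card_Ico j k]
  refine card_nbij (seatLevel η) (fun x hx => ?_) (fun x hx y hy => ?_) fun i hi => ?_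
  · obtain ⟨hx, -, hlevel⟩ := mem_filter.1 hx
    exact mem_Ico.2 ⟨hlevel, h.seatLevel_lt hx⟩
  · obtain ⟨hx, hxb, -⟩ := mem_filter.1 hx
    obtain ⟨hy, hyb, -⟩ := mem_filter.1 hy
    exact h.eq_of_seatLevel_eq hx hy (hxb.trans hyb.symm)
  · obtain ⟨hji, hik⟩ := mem_Ico.1 hi
    obtain ⟨x, hx, hxb, rfl⟩ := h.exists_mem b i hik
    exact ⟨x, mem_filter.2 ⟨hx, hxb, hji⟩, rfl⟩

theorem card_filter_le_seatLevel (j : ℕ) : #{x ∈ γ | j ≤ seatLevel η x} = 2 * (k - j) := by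
  have htrue := h.card_filter_eq_and_le_seatLevel j true
  have hfalse := h.card_filter_eq_and_le_seatLevel j false
  simp_rw [and_comm (a := η _ = _), ← filter_filter] at htrue hfalse
  have := card_filter_add_card_filter_not (s := {x ∈ γ | j ≤ seatLevel η x}) (fun x => η x = true)
  simp only [Bool.not_eq_true] at this
  omega

theorem le_card : k ≤ #γ := by
  have := h.card_filter_eq_and_le_seatLevel 0 true
  have := Finset.card_filter_le γ fun x => η x = true ∧ 0 ≤ seatLevel η x
  omega

/-- The bridge from slots as defined by ranks within a head or a tail to slot levels. -/
theorem rank_iff {j : ℕ} {x : ℤ} :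
    ((x ∈ tailF η γ ∧ j < #{y ∈ tailF η γ | y ≤ x}) ∨
      (x ∈ headF η γ ∧ j < #{y ∈ headF η γ | y ≤ x})) ↔ x ∈ γ ∧ j ≤ seatLevel η x := by
  unfold tailF headF
  by_cases hx : x ∈ γ
  · cases hb : η x <;> simp [hx, hb, h.card_filter_le hx hb]
  · simp [hx]

end IsSolitonShape

theorem IsDriftedLift.isKSlot_iff {η : Cfg} {ξ : ℤ → ℤ} (h : IsDriftedLift η ξ) {k : ℕ} {x : ℤ} :
    IsKSlot η k x ↔ isRecord η x ∨ k ≤ seatLevel η x := by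
  by_cases hr : isRecord η x
  · simp [IsKSlot, hr]
  · simp only [IsKSlot, hr, false_or]
    constructor
    · rintro ⟨m, γ, hγ, hx⟩
      exact ((h.isSolitonShape_of_mem_Gamma hγ).rank_iff.1 hx).2
    · intro hk
      obtain ⟨m, γ, hγ, hx⟩ := h.exists_mem_Gamma hr
      exact ⟨m, γ, hγ, (h.isSolitonShape_of_mem_Gamma hγ).rank_iff.2 ⟨hx, hk⟩⟩

/-! ### One step of the dynamics -/

theorem bbsT_eq_true_iff {η : Cfg} {x : ℤ} : bbsT η x = true ↔ η x = false ∧ ¬ isRecord η x := by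
  unfold bbsT
  split_ifs with hr <;> simp [hr]

theorem bbsT_eq_false_iff {η : Cfg} {x : ℤ} : bbsT η x = false ↔ η x = true ∨ isRecord η x := by
  unfold bbsT
  split_ifs with hr <;> simp [hr]

theorem mem_tailF {η : Cfg} {γ : Finset ℤ} {x : ℤ} : x ∈ tailF η γ ↔ x ∈ γ ∧ η x = false :=
  mem_filter

theorem mem_headF {η : Cfg} {γ : Finset ℤ} {x : ℤ} : x ∈ headF η γ ↔ x ∈ γ ∧ η x = true :=
  mem_filter

/-- `B` is the complement of `A` below each element of `A`. This is how the occupied seats of the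
carriers of `η` and of `bbsT η` are related. -/
def IsComplementBelow (A B : Finset ℕ) : Prop := ∀ i ∈ A, ∀ j ≤ i, (j ∈ B ↔ j ∉ A)

theorem IsComplementBelow.isSeat_not {A B : Finset ℕ} (hAB : IsComplementBelow A B) {i s : ℕ}
    (hi : i ∈ A) (hs : s ≤ i) {b : Bool} (hseat : IsSeat (fun j => decide (j ∈ A)) b s) :
    IsSeat (fun j => decide (j ∈ B)) (!b) s := by
  have swap : ∀ j ≤ i, decide (j ∈ B) = !decide (j ∈ A) := fun j hj => by simp [hAB i hi j hj]
  exact ⟨(swap s hs).trans (congrArg not hseat.1),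
    fun j hj => (swap j (hj.le.trans hs)).trans (congrArg not (hseat.2 j hj))⟩

namespace IsDriftedLift

variable {η : Cfg} {ξ : ℤ → ℤ} (h : IsDriftedLift η ξ) {x : ℤ}

include h

theorem carrier_subset_of_eq_false (hx : η x = false) : carrier η x ⊆ carrier η (x - 1) := by
  by_cases hr : isRecord η x
  · simp [carrier_of_isRecord hr]
  · rw [h.carrier_of_eq_false hx hr]
    exact erase_subset _ _

theorem not_isRecord_of_mem_carrier {j : ℕ} (hj : j ∈ carrier η (x - 1)) : ¬ isRecord η x :=
  fun hr => by simp [h.carrier_sub_one_of_isRecord hr] at hj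

theorem seatLevel_bbsT_of_isComplementBelow
    (hcompl : IsComplementBelow (carrier η (x - 1)) (carrier (bbsT η) (x - 1)))
    (hx : bbsT η x = true) : seatLevel (bbsT η) x = seatLevel η x := by
  obtain ⟨hempty, hr⟩ := bbsT_eq_true_iff.1 hx
  have hseat := h.isSeat_seatLevel hr
  have hseat' := h.next.isSeat_seatLevel (h.next.not_isRecord_of_eq_true hx)
  rw [hempty] at hseat
  rw [hx] at hseat'
  exact hseat'.unique (hcompl.isSeat_not (h.seatLevel_of_eq_false hempty hr).1 le_rfl hseat)

theorem isComplementBelow_carrier_of_eq_true (hx : η x = true)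
    (hcompl : IsComplementBelow (carrier η (x - 1)) (carrier (bbsT η) (x - 1))) :
    IsComplementBelow (carrier η x) (carrier (bbsT η) x) := by
  obtain ⟨hfree, hbelow⟩ := h.seatLevel_of_eq_true hx
  have hx' : bbsT η x = false := bbsT_eq_false_iff.2 (Or.inl hx)
  have hbelow' : ∀ j < seatLevel η x, j ∉ carrier (bbsT η) (x - 1) := fun j hj hj' =>
    (hcompl j (hbelow j hj) j le_rfl).1 hj' (hbelow j hj)
  rw [h.carrier_of_eq_true hx]
  by_cases hs : seatLevel η x ∈ carrier (bbsT η) (x - 1)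
  · have hr' := h.next.not_isRecord_of_mem_carrier hs
    have hlevel : seatLevel (bbsT η) x = seatLevel η x :=
      (hx' ▸ h.next.isSeat_seatLevel hr').unique (isSeat_false_iff.2 ⟨hs, hbelow'⟩)
    rw [h.next.carrier_of_eq_false hx' hr', hlevel]
    intro i hi j hj
    rw [mem_erase, mem_insert, not_or]
    refine and_congr_right fun hjs => ?_
    rcases mem_insert.1 hi with rfl | hi
    · simp [hbelow' j (by omega), hbelow j (by omega)]
    · exact hcompl i hi j hj
  · have hlow : ∀ i ∈ carrier η (x - 1), i < seatLevel η x := fun i hi => by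
      by_contra! hle
      exact hs ((hcompl i hi _ hle).2 hfree)
    intro i hi j hj
    have hjs : j ≤ seatLevel η x := by
      rcases mem_insert.1 hi with rfl | hi
      · exact hj
      · exact hj.trans (hlow i hi).le
    rcases hjs.lt_or_eq with hlt | rfl
    · have hj' := notMem_mono (h.next.carrier_subset_of_eq_false hx') (hbelow' j hlt)
      simp [hj', hbelow j hlt]
    · have hj' := notMem_mono (h.next.carrier_subset_of_eq_false hx') hs
      simp [hj']

theorem isComplementBelow_carrier (x : ℤ) :
    IsComplementBelow (carrier η x) (carrier (bbsT η) x) := by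
  induction x using h.record_induction with
  | record x hx => simp [IsComplementBelow, carrier_of_isRecord hx]
  | step x hr hcompl =>
    cases hx : η x with
    | true => exact h.isComplementBelow_carrier_of_eq_true hx hcompl
    | false =>
      have hx' := bbsT_eq_true_iff.2 ⟨hx, hr⟩
      rw [h.carrier_of_eq_false hx hr, h.next.carrier_of_eq_true hx',
        h.seatLevel_bbsT_of_isComplementBelow hcompl hx']
      intro i hi j hj
      rw [mem_insert, mem_erase, hcompl i (mem_of_mem_erase hi) j hj]
      tauto

theorem seatLevel_bbsT (hx : bbsT η x = true) : seatLevel (bbsT η) x = seatLevel η x :=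
  h.seatLevel_bbsT_of_isComplementBelow (h.isComplementBelow_carrier (x - 1)) hx

theorem bbsT_eq_true_of_mem_tailF {γ : Finset ℤ} {m : ℕ} (hγ : γ ∈ Gamma η m)
    (hx : x ∈ tailF η γ) : bbsT η x = true :=
  bbsT_eq_true_iff.2 ⟨(mem_tailF.1 hx).2,
    (h.isSolitonShape_of_mem_Gamma hγ).not_isRecord (mem_tailF.1 hx).1⟩

theorem exists_common_seatLevel_eq_zero {γ γ' : Finset ℤ} {m m' : ℕ} (hγ : γ ∈ Gamma η m)
    (hγ' : γ' ∈ Gamma (bbsT η) m') (hx : x ∈ tailF η γ) (hx' : x ∈ headF (bbsT η) γ') :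
    ∃ y, y ∈ tailF η γ ∧ y ∈ headF (bbsT η) γ' ∧ seatLevel η y = 0 := by
  have shape := h.isSolitonShape_of_mem_Gamma hγ
  have shape' := h.next.isSolitonShape_of_mem_Gamma hγ'
  induction hlevel : seatLevel η x generalizing x with
  | zero => exact ⟨x, hx, hx', hlevel⟩
  | succ s ih =>
    obtain ⟨hxγ, hxempty⟩ := mem_tailF.1 hx
    obtain ⟨hxγ', hxball⟩ := mem_headF.1 hx'
    have hxlevel := h.seatLevel_bbsT hxball
    have := shape.seatLevel_lt hxγ
    have := shape'.seatLevel_lt hxγ'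
    obtain ⟨y, hyγ, hyempty, hylevel⟩ := shape.exists_mem false s (by omega)
    obtain ⟨z, hzγ', hzball, hzlevel⟩ := shape'.exists_mem true s (by omega)
    have hytail := mem_tailF.2 ⟨hyγ, hyempty⟩
    have hylevel' := h.seatLevel_bbsT (h.bbsT_eq_true_of_mem_tailF hγ hytail)
    have hzlevel' := h.seatLevel_bbsT hzball
    have hyx : y < x := (shape.lt_iff y hyγ x hxγ (hyempty.trans hxempty.symm)).2 (by omega)
    have hzx : z < x := (shape'.lt_iff z hzγ' x hxγ' (hzball.trans hxball.symm)).2 (by omega)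
    obtain rfl : y = z := by
      rcases lt_trichotomy y z with hyz | hyz | hzy
      · have := shape.gap y hyγ x hxγ (hyempty.trans hxempty.symm) (by omega) z hyz hzx
        omega
      · exact hyz
      · have := shape'.gap z hzγ' x hxγ' (hzball.trans hxball.symm) (by omega) y hzy hyx
        omega
    exact ih hytail (mem_headF.2 ⟨hzγ', hzball⟩) hylevel

theorem headF_eq_tailF_of_mem {γ γ' : Finset ℤ} {m m' : ℕ} (hγ : γ ∈ Gamma η m)
    (hγ' : γ' ∈ Gamma (bbsT η) m') (hx : x ∈ tailF η γ) (hx' : x ∈ headF (bbsT η) γ') :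
    headF (bbsT η) γ' = tailF η γ := by
  have shape := h.isSolitonShape_of_mem_Gamma hγ
  have shape' := h.next.isSolitonShape_of_mem_Gamma hγ'
  obtain ⟨w, hwtail, hwhead, hw⟩ := h.exists_common_seatLevel_eq_zero hγ hγ' hx hx'
  obtain ⟨hwγ, hwempty⟩ := mem_tailF.1 hwtail
  obtain ⟨hwγ', hwball⟩ := mem_headF.1 hwhead
  ext y
  constructor
  · intro hy
    have hyball := (mem_headF.1 hy).2
    obtain ⟨hyempty, hr⟩ := bbsT_eq_true_iff.1 hyball
    obtain ⟨n, δ, hδ, hyδ⟩ := h.exists_mem_Gamma hr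
    have hytail := mem_tailF.2 ⟨hyδ, hyempty⟩
    obtain ⟨v, hvtail, hvhead, hv⟩ := h.exists_common_seatLevel_eq_zero hδ hγ' hytail hy
    obtain ⟨hvγ', hvball⟩ := mem_headF.1 hvhead
    obtain rfl : v = w := shape'.eq_of_seatLevel_eq hvγ' hwγ' (hvball.trans hwball.symm)
      (by rw [h.seatLevel_bbsT hvball, h.seatLevel_bbsT hwball, hv, hw])
    rwa [h.Gamma_eq_of_mem hγ hδ hwγ (mem_tailF.1 hvtail).1]
  · intro hy
    have hyball := h.bbsT_eq_true_of_mem_tailF hγ hy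
    obtain ⟨n, δ, hδ, hyδ⟩ := h.next.exists_mem_Gamma (h.next.not_isRecord_of_eq_true hyball)
    have hyhead := mem_headF.2 ⟨hyδ, hyball⟩
    obtain ⟨v, hvtail, hvhead, hv⟩ := h.exists_common_seatLevel_eq_zero hγ hδ hy hyhead
    obtain ⟨hvγ, hvempty⟩ := mem_tailF.1 hvtail
    obtain rfl : v = w := shape.eq_of_seatLevel_eq hvγ hwγ (hvempty.trans hwempty.symm)
      (hv.trans hw.symm)
    rwa [h.next.Gamma_eq_of_mem hγ' hδ hwγ' (mem_headF.1 hvhead).1]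

theorem eq_of_headF_eq_tailF {γ γ' : Finset ℤ} {m m' : ℕ} (hγ : γ ∈ Gamma η m)
    (hγ' : γ' ∈ Gamma (bbsT η) m') (heq : headF (bbsT η) γ' = tailF η γ) : m' = m := by
  have shape := h.isSolitonShape_of_mem_Gamma hγ
  have shape' := h.next.isSolitonShape_of_mem_Gamma hγ'
  have := shape.one_le
  have := shape'.one_le
  apply le_antisymm
  · obtain ⟨y, hy, hyball, hlevel⟩ := shape'.exists_mem true (m' - 1) (by omega)
    have hytail : y ∈ tailF η γ := heq ▸ mem_headF.2 ⟨hy, hyball⟩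
    have := shape.seatLevel_lt (mem_tailF.1 hytail).1
    have := h.seatLevel_bbsT hyball
    omega
  · obtain ⟨y, hy, hyempty, hlevel⟩ := shape.exists_mem false (m - 1) (by omega)
    have hyhead : y ∈ headF (bbsT η) γ' := heq ▸ mem_tailF.2 ⟨hy, hyempty⟩
    have := shape'.seatLevel_lt (mem_headF.1 hyhead).1
    have := h.seatLevel_bbsT (mem_headF.1 hyhead).2
    omega

theorem exists_headF_eq_tailF {γ : Finset ℤ} {m : ℕ} (hγ : γ ∈ Gamma η m) :
    ∃ γ' ∈ Gamma (bbsT η) m, headF (bbsT η) γ' = tailF η γ := by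
  have shape := h.isSolitonShape_of_mem_Gamma hγ
  obtain ⟨x, hx, hempty, -⟩ := shape.exists_mem false 0 shape.one_le
  have hxtail := mem_tailF.2 ⟨hx, hempty⟩
  have hball := h.bbsT_eq_true_of_mem_tailF hγ hxtail
  obtain ⟨m', γ', hγ', hx'⟩ := h.next.exists_mem_Gamma (h.next.not_isRecord_of_eq_true hball)
  have heq := h.headF_eq_tailF_of_mem hγ hγ' hxtail (mem_headF.2 ⟨hx', hball⟩)
  exact ⟨γ', h.eq_of_headF_eq_tailF hγ hγ' heq ▸ hγ', heq⟩

theorem exists_tailF_eq_headF {γ' : Finset ℤ} {m : ℕ} (hγ' : γ' ∈ Gamma (bbsT η) m) :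
    ∃ γ ∈ Gamma η m, headF (bbsT η) γ' = tailF η γ := by
  have shape' := h.next.isSolitonShape_of_mem_Gamma hγ'
  obtain ⟨x, hx', hball, -⟩ := shape'.exists_mem true 0 shape'.one_le
  obtain ⟨hempty, hr⟩ := bbsT_eq_true_iff.1 hball
  obtain ⟨m', γ, hγ, hx⟩ := h.exists_mem_Gamma hr
  have heq := h.headF_eq_tailF_of_mem hγ hγ' (mem_tailF.2 ⟨hx, hempty⟩)
    (mem_headF.2 ⟨hx', hball⟩)
  exact ⟨γ, h.eq_of_headF_eq_tailF hγ hγ' heq ▸ hγ, heq⟩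

end IsDriftedLift

/-! ### Enumeration of the slots -/

theorem exists_strictMono_range_eq {S : Set ℤ} {b : ℤ} (hb : b ∈ S) (hleft : ∀ a, ∃ x ∈ S, x < a)
    (hright : ∀ a, ∃ x ∈ S, a < x) : ∃ f : ℤ → ℤ, StrictMono f ∧ f 0 = b ∧ Set.range f = S := by
  classical
  have : NoMaxOrder S := ⟨fun a => let ⟨x, hx, hlt⟩ := hright a; ⟨⟨x, hx⟩, hlt⟩⟩
  have : NoMinOrder S := ⟨fun a => let ⟨x, hx, hlt⟩ := hleft a; ⟨⟨x, hx⟩, hlt⟩⟩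
  have : Nonempty S := ⟨⟨b, hb⟩⟩
  let : LocallyFiniteOrder S := Subtype.instLocallyFiniteOrder (fun x => x ∈ S)
  let : SuccOrder S := LinearLocallyFiniteOrder.succOrder S
  let : PredOrder S := LinearLocallyFiniteOrder.predOrder S
  let e : S ≃o ℤ := orderIsoIntOfLinearSuccPredArch
  refine ⟨fun i => (e.symm (i + e ⟨b, hb⟩) : S), fun i j hij => ?_, by simp, ?_⟩
  · exact e.symm.strictMono (add_lt_add_left hij _)
  · ext x
    constructor
    · rintro ⟨i, rfl⟩
      exact (e.symm _).2
    · exact fun hx => ⟨e ⟨x, hx⟩ - e ⟨b, hb⟩, by simp⟩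

theorem enumZ_spec {S : Set ℤ} {b : ℤ} (hb : b ∈ S) (hleft : ∀ a, ∃ x ∈ S, x < a)
    (hright : ∀ a, ∃ x ∈ S, a < x) :
    StrictMono (enumZ S b) ∧ enumZ S b 0 = b ∧ Set.range (enumZ S b) = S := by
  have hex := exists_strictMono_range_eq hb hleft hright
  rw [enumZ, dif_pos hex]
  exact hex.choose_spec

theorem eq_of_forall_eq_sub_one {α : Type*} {F : ℤ → α} (hF : ∀ x, F x = F (x - 1)) (x y : ℤ) :
    F x = F y := by
  have hperiodic : Function.Periodic F 1 := fun x => by rw [hF, add_sub_cancel_right]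
  have eq_zero (x : ℤ) : F x = F 0 := by simpa using (hperiodic.int_mul x).eq
  rw [eq_zero x, eq_zero y]

/-- The index of the last `k`-slot up to `x`. -/
noncomputable def slotIndex (η : Cfg) (ξ : ℤ → ℤ) (k : ℕ) (x : ℤ) : ℤ :=
  sSup {i | skEnum η ξ k i ≤ x}

/-- The index of the `k`-slot to which a `k`-soliton `γ` is appended, encoded as the last one to
the left of all the sites of `γ`. -/
noncomputable def solitonIndex (η : Cfg) (ξ : ℤ → ℤ) (k : ℕ) (γ : Finset ℤ) : ℤ :=
  sSup {i | ∀ x ∈ γ, skEnum η ξ k i ≤ x}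

namespace IsDriftedLift

variable {η : Cfg} {ξ : ℤ → ℤ} (h : IsDriftedLift η ξ) {k : ℕ} {x : ℤ}

include h

theorem skEnum_spec (k : ℕ) : StrictMono (skEnum η ξ k) ∧ skEnum η ξ k 0 = recPos ξ 0 ∧
    Set.range (skEnum η ξ k) = {x | IsKSlot η k x} :=
  enumZ_spec (Or.inl (h.isRecord_recPos 0))
    (fun a => let ⟨x, hx, hr⟩ := h.exists_isRecord_le (a - 1); ⟨x, Or.inl hr, by omega⟩)
    (fun a => let ⟨x, hx, hr⟩ := h.exists_isRecord_ge (a + 1); ⟨x, Or.inl hr, by omega⟩)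

theorem strictMono_skEnum (k : ℕ) : StrictMono (skEnum η ξ k) := (h.skEnum_spec k).1

theorem skEnum_zero (k : ℕ) : skEnum η ξ k 0 = recPos ξ 0 := (h.skEnum_spec k).2.1

theorem isKSlot_iff_exists_skEnum_eq : IsKSlot η k x ↔ ∃ i, skEnum η ξ k i = x :=
  (Set.ext_iff.1 (h.skEnum_spec k).2.2 x).symm

theorem skEnum_le_iff {i : ℤ} : skEnum η ξ k i ≤ x ↔ i ≤ slotIndex η ξ k x := by
  obtain ⟨a, ha, hra⟩ := h.exists_isRecord_le x
  obtain ⟨b, hb, hrb⟩ := h.exists_isRecord_ge x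
  obtain ⟨i₁, rfl⟩ := h.isKSlot_iff_exists_skEnum_eq.1 (Or.inl hra : IsKSlot η k a)
  obtain ⟨i₂, rfl⟩ := h.isKSlot_iff_exists_skEnum_eq.1 (Or.inl hrb : IsKSlot η k b)
  have hbdd : BddAbove {i | skEnum η ξ k i ≤ x} :=
    ⟨i₂, fun i hi => (h.strictMono_skEnum k).le_iff_le.1 (hi.trans hb)⟩
  exact ⟨fun hi => le_csSup hbdd hi,
    fun hi => ((h.strictMono_skEnum k).monotone hi).trans (Int.csSup_mem ⟨i₁, ha⟩ hbdd)⟩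

theorem slotIndex_skEnum (i : ℤ) : slotIndex η ξ k (skEnum η ξ k i) = i :=
  eq_of_forall_le_iff fun j => by rw [← h.skEnum_le_iff, (h.strictMono_skEnum k).le_iff_le]

theorem slotIndex_recPos (k : ℕ) : slotIndex η ξ k (recPos ξ 0) = 0 := by
  rw [← h.skEnum_zero k, h.slotIndex_skEnum]

open Classical in
theorem slotIndex_eq_add (k : ℕ) (x : ℤ) :
    slotIndex η ξ k x = slotIndex η ξ k (x - 1) + if IsKSlot η k x then 1 else 0 := by
  split_ifs with hx
  · obtain ⟨i, rfl⟩ := h.isKSlot_iff_exists_skEnum_eq.1 hx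
    rw [h.slotIndex_skEnum, ← sub_eq_iff_eq_add]
    refine eq_of_forall_le_iff fun j => ?_
    rw [← h.skEnum_le_iff, Int.le_sub_one_iff, Int.le_sub_one_iff,
      (h.strictMono_skEnum k).lt_iff_lt]
  · refine eq_of_forall_le_iff fun j => ?_
    rw [add_zero, ← h.skEnum_le_iff, ← h.skEnum_le_iff, Int.le_sub_one_iff]
    exact ⟨fun hle => hle.lt_of_ne fun he => hx (h.isKSlot_iff_exists_skEnum_eq.2 ⟨j, he⟩),
      le_of_lt⟩

variable {γ : Finset ℤ} (hγ : γ ∈ Gamma η k)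

include hγ

theorem not_isKSlot_of_mem_hull {y z : ℤ} (hx : x ∈ γ) (hy : y ∈ γ) (hxz : x ≤ z) (hzy : z ≤ y) :
    ¬ IsKSlot η k z := by
  have := (h.isSolitonShape_of_mem_Gamma hγ).hull x hx y hy z hxz hzy
  rw [h.isKSlot_iff, not_or, not_le]
  exact this

theorem slotIndex_eq_of_mem {y : ℤ} (hx : x ∈ γ) (hy : y ∈ γ) :
    slotIndex η ξ k x = slotIndex η ξ k y := by
  have le {x y : ℤ} (hx : x ∈ γ) (hy : y ∈ γ) : slotIndex η ξ k x ≤ slotIndex η ξ k y := by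
    rw [← h.skEnum_le_iff]
    by_contra! hlt
    exact h.not_isKSlot_of_mem_hull hγ hy hx hlt.le (h.skEnum_le_iff.2 le_rfl)
      (h.isKSlot_iff_exists_skEnum_eq.2 ⟨_, rfl⟩)
  exact (le hx hy).antisymm (le hy hx)

theorem solitonIndex_eq (hx : x ∈ γ) : solitonIndex η ξ k γ = slotIndex η ξ k x := by
  have : {i | ∀ y ∈ γ, skEnum η ξ k i ≤ y} = Set.Iic (slotIndex η ξ k x) := by
    ext i
    refine ⟨fun hi => h.skEnum_le_iff.1 (hi x hx), fun hi y hy => ?_⟩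
    rwa [h.skEnum_le_iff, h.slotIndex_eq_of_mem hγ hy hx]
  rw [solitonIndex, this, csSup_Iic]

theorem forall_skEnum_le_iff {i : ℤ} :
    (∀ x ∈ γ, skEnum η ξ k i ≤ x) ↔ i ≤ solitonIndex η ξ k γ := by
  have shape := h.isSolitonShape_of_mem_Gamma hγ
  obtain ⟨x, hx, -⟩ := shape.exists_mem true 0 shape.one_le
  simp only [h.skEnum_le_iff]
  exact ⟨fun hi => h.solitonIndex_eq hγ hx ▸ hi x hx, fun hi y hy => h.solitonIndex_eq hγ hy ▸ hi⟩

theorem forall_lt_skEnum_iff {i : ℤ} :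
    (∀ x ∈ γ, x < skEnum η ξ k i) ↔ solitonIndex η ξ k γ < i := by
  have shape := h.isSolitonShape_of_mem_Gamma hγ
  obtain ⟨x, hx, -⟩ := shape.exists_mem true 0 shape.one_le
  simp only [← not_le, h.skEnum_le_iff]
  exact ⟨fun hi => h.solitonIndex_eq hγ hx ▸ hi x hx, fun hi y hy => h.solitonIndex_eq hγ hy ▸ hi⟩

theorem forall_lt_recPos_iff : (∀ x ∈ γ, x < recPos ξ 0) ↔ solitonIndex η ξ k γ < 0 := by
  rw [← h.skEnum_zero k, h.forall_lt_skEnum_iff hγ]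

theorem forall_recPos_le_iff : (∀ x ∈ γ, recPos ξ 0 ≤ x) ↔ 0 ≤ solitonIndex η ξ k γ := by
  rw [← h.skEnum_zero k, h.forall_skEnum_le_iff hγ]

omit hγ

theorem Mk_eq_ncard (k : ℕ) (i : ℤ) :
    Mk η ξ k i = Set.ncard {γ | γ ∈ Gamma η k ∧ solitonIndex η ξ k γ = i} := by
  rw [Mk]
  congr 1
  ext γ
  refine and_congr_right fun hγ => ?_
  have lt_iff_le : (∀ x ∈ γ, skEnum η ξ k i < x) ↔ ∀ x ∈ γ, skEnum η ξ k i ≤ x :=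
    forall₂_congr fun x hx =>
      ⟨le_of_lt, fun hle => hle.lt_of_ne fun he => h.not_isKSlot_of_mem_hull hγ hx hx le_rfl le_rfl
        (h.isKSlot_iff_exists_skEnum_eq.2 ⟨i, he⟩)⟩
  rw [forall₂_and, h.forall_lt_skEnum_iff hγ, lt_iff_le, h.forall_skEnum_le_iff hγ]
  omega

end IsDriftedLift

/-! ### The index shift in one step -/

/-- The number of seats below `k` that are occupied when `A` is the set of occupied seats. -/
def numLowSeats (k : ℕ) (A : Finset ℕ) : ℕ := #{j ∈ A | j < k}

theorem numLowSeats_empty (k : ℕ) : numLowSeats k ∅ = 0 := rfl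

theorem numLowSeats_insert {k s : ℕ} {A : Finset ℕ} (hs : s ∉ A) :
    numLowSeats k (insert s A) = numLowSeats k A + if s < k then 1 else 0 := by
  unfold numLowSeats
  split_ifs with hsk <;> simp [filter_insert, hsk, hs]

theorem numLowSeats_erase_add {k s : ℕ} {A : Finset ℕ} (hs : s ∈ A) :
    numLowSeats k (A.erase s) + (if s < k then 1 else 0) = numLowSeats k A := by
  rw [← numLowSeats_insert (notMem_erase s A), insert_erase hs]

/-- The balls of slot level at least `k` in `(a, b]`. -/
noncomputable def highBalls (η : Cfg) (k : ℕ) (a b : ℤ) : Finset ℤ :=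
  {y ∈ Ioc a b | η y = true ∧ k ≤ seatLevel η y}

theorem card_highBalls_add_one (η : Cfg) (k : ℕ) {a b : ℤ} (hab : a ≤ b) :
    #(highBalls η k a (b + 1)) = #(highBalls η k a b) +
      if η (b + 1) = true ∧ k ≤ seatLevel η (b + 1) then 1 else 0 := by
  rw [highBalls, highBalls, ← insert_Ioc_right_eq_Ioc_add_one hab, filter_insert]
  split_ifs <;> simp

namespace IsDriftedLift

variable {η : Cfg} {ξ : ℤ → ℤ} (h : IsDriftedLift η ξ) {x : ℤ}

include h

open Classical in
theorem numLowSeats_carrier (k : ℕ) (x : ℤ) :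
    (numLowSeats k (carrier η x) : ℤ) = numLowSeats k (carrier η (x - 1)) +
      if IsKSlot η k x then 0 else 2 * valZ (η x) - 1 := by
  rw [h.isKSlot_iff]
  by_cases hr : isRecord η x
  · simp [hr, carrier_of_isRecord hr, h.carrier_sub_one_of_isRecord hr]
  · cases hx : η x with
    | true =>
      rw [h.carrier_of_eq_true hx, numLowSeats_insert (h.seatLevel_of_eq_true hx).1]
      simp only [hr, false_or, valZ, if_true]
      split_ifs <;> omega
    | false =>
      rw [h.carrier_of_eq_false hx hr, ← numLowSeats_erase_add (h.seatLevel_of_eq_false hx hr).1]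
      simp only [hr, false_or, valZ, Bool.false_eq_true, if_false]
      split_ifs <;> omega

theorem isKSlot_bbsT_iff {k : ℕ} (hx : bbsT η x = true) : IsKSlot (bbsT η) k x ↔ IsKSlot η k x := by
  rw [h.isKSlot_iff, h.next.isKSlot_iff, h.seatLevel_bbsT hx]
  simp [h.next.not_isRecord_of_eq_true hx, (bbsT_eq_true_iff.1 hx).2]

/-- The occupied seats below `k` of the carriers of `η` and of `bbsT η` together form a potential
for the difference of the counts of `k`-slots of `bbsT η` and of `η`. -/
theorem slotIndex_bbsT_sub_eq (k : ℕ) (x y : ℤ) :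
    slotIndex (bbsT η) (liftT ξ) k x - slotIndex η ξ k x
      - (numLowSeats k (carrier η x) + numLowSeats k (carrier (bbsT η) x)) =
    slotIndex (bbsT η) (liftT ξ) k y - slotIndex η ξ k y
      - (numLowSeats k (carrier η y) + numLowSeats k (carrier (bbsT η) y)) := by
  classical
  refine eq_of_forall_eq_sub_one (F := fun z => slotIndex (bbsT η) (liftT ξ) k z - slotIndex η ξ k z
    - (numLowSeats k (carrier η z) + numLowSeats k (carrier (bbsT η) z))) (fun z => ?_) x y
  rw [h.slotIndex_eq_add, h.next.slotIndex_eq_add, h.numLowSeats_carrier,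
    h.next.numLowSeats_carrier]
  by_cases hr : isRecord η z
  · have hslot : IsKSlot η k z := Or.inl hr
    simp only [hslot, bbsT_eq_false_iff.2 (Or.inr hr), valZ, Bool.false_eq_true, if_false, if_true]
    split_ifs <;> ring
  · cases hz : η z with
    | true =>
      simp only [bbsT_eq_false_iff.2 (Or.inl hz), valZ, Bool.false_eq_true, if_false, if_true]
      split_ifs <;> ring
    | false =>
      have hz' := bbsT_eq_true_iff.2 ⟨hz, hr⟩
      simp only [h.isKSlot_bbsT_iff hz', hz', valZ, Bool.false_eq_true, if_false, if_true]
      split_ifs <;> ring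

theorem slotIndex_sub_slotIndex (k : ℕ) {a : ℤ} (hax : a ≤ x) :
    slotIndex η ξ k x - slotIndex η ξ k a =
      numLowSeats k (carrier η x) - numLowSeats k (carrier η a) - (ξ x - ξ a)
        + 2 * #(highBalls η k a x) := by
  classical
  induction x, hax using Int.leInduction with
  | base => simp [highBalls]
  | succ x hax ih =>
    have hlift := h.isLift (x + 1)
    have hcard := card_highBalls_add_one η k hax
    have hslot := h.isKSlot_iff (k := k) (x := x + 1)
    rw [h.slotIndex_eq_add, h.numLowSeats_carrier, hcard]
    rw [add_sub_cancel_right] at hlift ⊢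
    cases hx : η (x + 1) with
    | true =>
      simp only [hx, hslot, h.not_isRecord_of_eq_true hx, valZ, true_and, false_or,
        if_true] at hlift ⊢
      split_ifs <;> push_cast <;> omega
    | false =>
      simp only [hx, valZ, Bool.false_eq_true, false_and, if_false] at hlift ⊢
      split_ifs <;> push_cast <;> omega

theorem liftT_recPos_zero : liftT ξ (recPos ξ 0) = 0 := by
  obtain ⟨heq, hr, -⟩ := h.recPos_spec 0
  have := h.runMin_eq_min (recPos ξ 0)
  have := h.isRecord_iff_lt_runMin.1 hr
  rw [liftT]
  omega

theorem recPos_liftT_le : recPos (liftT ξ) 0 ≤ recPos ξ 0 := by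
  by_contra! hlt
  have := (h.next.recPos_spec 0).2.2 _ hlt
  rw [h.liftT_recPos_zero] at this
  omega

theorem slotIndex_bbsT (k : ℕ) (x : ℤ) :
    slotIndex (bbsT η) (liftT ξ) k x = slotIndex η ξ k x
      + (numLowSeats k (carrier η x) + numLowSeats k (carrier (bbsT η) x))
      + 2 * #(highBalls (bbsT η) k (recPos (liftT ξ) 0) (recPos ξ 0)) := by
  have hpotential := h.slotIndex_bbsT_sub_eq k x (recPos ξ 0)
  have hcount := h.next.slotIndex_sub_slotIndex k h.recPos_liftT_le
  rw [h.next.slotIndex_recPos, h.liftT_recPos_zero, (h.next.recPos_spec 0).1,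
    carrier_of_isRecord (h.next.isRecord_recPos 0), numLowSeats_empty] at hcount
  rw [h.slotIndex_recPos, carrier_of_isRecord (h.isRecord_recPos 0), numLowSeats_empty]
    at hpotential
  push_cast at hcount hpotential
  linarith

theorem numLowSeats_carrier_add_eq {k : ℕ} (hx : η x = false) (hr : ¬ isRecord η x)
    (hlevel : seatLevel η x + 1 = k) :
    numLowSeats k (carrier η x) + numLowSeats k (carrier (bbsT η) x) = k := by
  have hx' := bbsT_eq_true_iff.2 ⟨hx, hr⟩
  have hlevel' := h.seatLevel_bbsT hx'
  have hbelow := (h.seatLevel_of_eq_false hx hr).2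
  have hbelow' := (h.next.seatLevel_of_eq_true hx').2
  have hempty : {j ∈ carrier η x | j < k} = ∅ := by
    rw [filter_eq_empty_iff, h.carrier_of_eq_false hx hr]
    intro j hj hjk
    obtain ⟨hne, hj⟩ := mem_erase.1 hj
    exact hbelow j (by omega) hj
  have hfull : {j ∈ carrier (bbsT η) x | j < k} = range k := by
    ext j
    rw [mem_filter, mem_range, h.next.carrier_of_eq_true hx', mem_insert]
    refine and_iff_right_of_imp fun hj => ?_
    by_cases hjs : j = seatLevel (bbsT η) x
    · exact Or.inl hjs
    · exact Or.inr (hbelow' j (by omega))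
  rw [numLowSeats, numLowSeats, hempty, hfull, card_empty, card_range, zero_add]

theorem solitonIndex_bbsT {k : ℕ} {γ γ' : Finset ℤ} (hγ : γ ∈ Gamma η k)
    (hγ' : γ' ∈ Gamma (bbsT η) k) (heq : headF (bbsT η) γ' = tailF η γ) :
    solitonIndex (bbsT η) (liftT ξ) k γ' = solitonIndex η ξ k γ + k +
      2 * #(highBalls (bbsT η) k (recPos (liftT ξ) 0) (recPos ξ 0)) := by
  have shape := h.isSolitonShape_of_mem_Gamma hγ
  have hk := shape.one_le
  obtain ⟨x, hx, hempty, hlevel⟩ := shape.exists_mem false (k - 1) (by omega)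
  have hx' : x ∈ γ' := (mem_headF.1 (heq ▸ mem_tailF.2 ⟨hx, hempty⟩)).1
  have hpotential := h.numLowSeats_carrier_add_eq hempty (shape.not_isRecord hx)
    (k := k) (by omega)
  rw [h.solitonIndex_eq hγ hx, h.next.solitonIndex_eq hγ' hx', h.slotIndex_bbsT]
  omega

end IsDriftedLift

/-! ### Trajectories -/

namespace IsDriftedLift

variable {η : Cfg} {ξ : ℤ → ℤ} (h : IsDriftedLift η ξ) {k : ℕ} {γ γ' : Finset ℤ}
  (hγ : γ ∈ Gamma η k)

include h hγ

theorem eq_of_headF_eq {k' : ℕ} (hγ' : γ' ∈ Gamma η k') (heq : headF η γ = headF η γ') :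
    γ = γ' := by
  have shape := h.isSolitonShape_of_mem_Gamma hγ
  obtain ⟨x, hx, hball, -⟩ := shape.exists_mem true 0 shape.one_le
  exact h.Gamma_eq_of_mem hγ hγ' hx (mem_headF.1 (heq ▸ mem_headF.2 ⟨hx, hball⟩)).1

theorem eq_of_tailF_eq {k' : ℕ} (hγ' : γ' ∈ Gamma η k') (heq : tailF η γ = tailF η γ') :
    γ = γ' := by
  have shape := h.isSolitonShape_of_mem_Gamma hγ
  obtain ⟨x, hx, hempty, -⟩ := shape.exists_mem false 0 shape.one_le
  exact h.Gamma_eq_of_mem hγ hγ' hx (mem_tailF.1 (heq ▸ mem_tailF.2 ⟨hx, hempty⟩)).1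

theorem solTraj_mem_Gamma (t : ℕ) : solTraj η k γ t ∈ Gamma (bbsT^[t] η) k := by
  induction t with
  | zero => exact hγ
  | succ t ih =>
    have hex := (h.iterate t).exists_headF_eq_tailF ih
    rw [← Function.iterate_succ_apply' bbsT] at hex
    rw [solTraj, dif_pos hex]
    exact hex.choose_spec.1

theorem headF_solTraj_succ (t : ℕ) :
    headF (bbsT^[t + 1] η) (solTraj η k γ (t + 1)) = tailF (bbsT^[t] η) (solTraj η k γ t) := by
  have hex := (h.iterate t).exists_headF_eq_tailF (h.solTraj_mem_Gamma hγ t)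
  rw [← Function.iterate_succ_apply' bbsT] at hex
  rw [solTraj, dif_pos hex]
  exact hex.choose_spec.2

theorem solTraj_one_solTraj (t : ℕ) :
    solTraj (bbsT^[t] η) k (solTraj η k γ t) 1 = solTraj η k γ (t + 1) := by
  have hmem := h.solTraj_mem_Gamma hγ t
  have hmem' := h.solTraj_mem_Gamma hγ (t + 1)
  have hhead := h.headF_solTraj_succ hγ t
  rw [Function.iterate_succ_apply'] at hmem' hhead
  exact (h.iterate t).next.eq_of_headF_eq ((h.iterate t).solTraj_mem_Gamma hmem 1) hmem'
    (((h.iterate t).headF_solTraj_succ hmem 0).trans hhead.symm)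

theorem solTraj_injective (hγ' : γ' ∈ Gamma η k) {t : ℕ}
    (heq : solTraj η k γ t = solTraj η k γ' t) : γ = γ' := by
  induction t with
  | zero => exact heq
  | succ t ih =>
    refine ih ((h.iterate t).eq_of_tailF_eq (h.solTraj_mem_Gamma hγ t)
      (h.solTraj_mem_Gamma hγ' t) ?_)
    rw [← h.headF_solTraj_succ hγ, ← h.headF_solTraj_succ hγ', heq]

omit hγ

theorem exists_solTraj_eq {t : ℕ} (hγ' : γ' ∈ Gamma (bbsT^[t] η) k) :
    ∃ γ ∈ Gamma η k, solTraj η k γ t = γ' := by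
  induction t generalizing γ' with
  | zero => exact ⟨γ', hγ', rfl⟩
  | succ t ih =>
    obtain ⟨δ, hδ, heq⟩ := (h.iterate t).exists_tailF_eq_headF
      (Function.iterate_succ_apply' bbsT t η ▸ hγ')
    obtain ⟨γ, hγ, rfl⟩ := ih hδ
    refine ⟨γ, hγ, (h.iterate (t + 1)).eq_of_headF_eq (h.solTraj_mem_Gamma hγ (t + 1)) hγ' ?_⟩
    rw [h.headF_solTraj_succ hγ, Function.iterate_succ_apply', heq]

include hγ

theorem solitonIndex_solTraj_succ (t : ℕ) :
    solitonIndex (bbsT^[t + 1] η) (liftT^[t + 1] ξ) k (solTraj η k γ (t + 1)) =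
      solitonIndex (bbsT^[t] η) (liftT^[t] ξ) k (solTraj η k γ t) + k +
        2 * #(highBalls (bbsT^[t + 1] η) k (recPos (liftT^[t + 1] ξ) 0)
          (recPos (liftT^[t] ξ) 0)) := by
  have hmem := h.solTraj_mem_Gamma hγ (t + 1)
  have hhead := h.headF_solTraj_succ hγ t
  simp only [Function.iterate_succ_apply'] at hmem hhead ⊢
  exact (h.iterate t).solitonIndex_bbsT (h.solTraj_mem_Gamma hγ t) hmem hhead

theorem solitonIndex_le_solitonIndex_solTraj (t : ℕ) :
    solitonIndex η ξ k γ ≤ solitonIndex (bbsT^[t] η) (liftT^[t] ξ) k (solTraj η k γ t) := by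
  induction t with
  | zero => exact le_rfl
  | succ t ih =>
    rw [h.solitonIndex_solTraj_succ hγ]
    omega

theorem forall_lt_recPos_iff_of_mem {x : ℤ} (hx : x ∈ γ) :
    (∀ y ∈ γ, y < recPos ξ 0) ↔ x < recPos ξ 0 := by
  rw [h.forall_lt_recPos_iff hγ, h.solitonIndex_eq hγ hx, ← not_le, ← h.skEnum_le_iff,
    h.skEnum_zero, not_le]

theorem forall_recPos_le_iff_of_mem {x : ℤ} (hx : x ∈ γ) :
    (∀ y ∈ γ, recPos ξ 0 ≤ y) ↔ recPos ξ 0 ≤ x := by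
  rw [h.forall_recPos_le_iff hγ, h.solitonIndex_eq hγ hx, ← h.skEnum_le_iff, h.skEnum_zero]

end IsDriftedLift

/-! ### The flow through Record 0 -/

/-- The `m`-solitons of `η` that cross Record 0 by time `t`, as counted by `Jflow`. -/
def crossing (η : Cfg) (ξ : ℤ → ℤ) (m t : ℕ) : Set (Finset ℤ) :=
  {γ | γ ∈ Gamma η m ∧ (∀ x ∈ γ, x < recPos ξ 0) ∧
    ∀ x ∈ solTraj η m γ t, recPos (liftT^[t] ξ) 0 ≤ x}

theorem Jflow_eq_ncard_crossing (η : Cfg) (ξ : ℤ → ℤ) (m t : ℕ) :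
    Jflow η ξ m t = (crossing η ξ m t).ncard := rfl

namespace IsDriftedLift

variable {η : Cfg} {ξ : ℤ → ℤ} (h : IsDriftedLift η ξ) {k m : ℕ} {γ : Finset ℤ}

include h

theorem mem_crossing_iff (hγ : γ ∈ Gamma η m) {t : ℕ} : γ ∈ crossing η ξ m t ↔
    solitonIndex η ξ m γ < 0 ∧
      0 ≤ solitonIndex (bbsT^[t] η) (liftT^[t] ξ) m (solTraj η m γ t) := by
  rw [← h.forall_lt_recPos_iff hγ,
    ← (h.iterate t).forall_recPos_le_iff (h.solTraj_mem_Gamma hγ t)]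
  exact and_iff_right hγ

theorem crossing_zero : crossing η ξ m 0 = ∅ := by
  refine Set.eq_empty_of_forall_notMem fun γ hγ => ?_
  obtain ⟨hneg, hnonneg⟩ := (h.mem_crossing_iff hγ.1).1 hγ
  exact hneg.not_ge hnonneg

theorem mem_crossing_iterate_iff (hγ : γ ∈ Gamma η m) {t : ℕ} :
    solTraj η m γ t ∈ crossing (bbsT^[t] η) (liftT^[t] ξ) m 1 ↔
      solitonIndex (bbsT^[t] η) (liftT^[t] ξ) m (solTraj η m γ t) < 0 ∧
        0 ≤ solitonIndex (bbsT^[t + 1] η) (liftT^[t + 1] ξ) m (solTraj η m γ (t + 1)) := by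
  rw [(h.iterate t).mem_crossing_iff (h.solTraj_mem_Gamma hγ t), h.solTraj_one_solTraj hγ,
    Function.iterate_succ_apply' bbsT t, Function.iterate_succ_apply' liftT t]
  rfl

theorem crossing_succ (m t : ℕ) : crossing η ξ m (t + 1) = crossing η ξ m t ∪
    {γ | γ ∈ Gamma η m ∧ solTraj η m γ t ∈ crossing (bbsT^[t] η) (liftT^[t] ξ) m 1} := by
  ext γ
  by_cases hγ : γ ∈ Gamma η m
  · have hstep := h.solitonIndex_solTraj_succ hγ t
    have hle := h.solitonIndex_le_solitonIndex_solTraj hγ t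
    rw [Set.mem_union, Set.mem_ofPred_eq, h.mem_crossing_iff hγ, h.mem_crossing_iff hγ,
      h.mem_crossing_iterate_iff hγ, and_iff_right hγ]
    omega
  · exact iff_of_false (fun hc => hγ hc.1) (by rintro (hc | hc) <;> exact hγ hc.1)

theorem disjoint_crossing_iterate (m t : ℕ) : Disjoint (crossing η ξ m t)
    {γ | γ ∈ Gamma η m ∧ solTraj η m γ t ∈ crossing (bbsT^[t] η) (liftT^[t] ξ) m 1} := by
  refine Set.disjoint_left.2 fun γ hc hc' => ?_
  have hnonneg := ((h.mem_crossing_iff hc.1).1 hc).2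
  exact ((h.mem_crossing_iterate_iff hc.1).1 hc'.2).1.not_ge hnonneg

theorem bijOn_solTraj (m t : ℕ) : Set.BijOn (fun γ => solTraj η m γ t)
    {γ | γ ∈ Gamma η m ∧ solTraj η m γ t ∈ crossing (bbsT^[t] η) (liftT^[t] ξ) m 1}
    (crossing (bbsT^[t] η) (liftT^[t] ξ) m 1) := by
  refine ⟨fun γ hγ => hγ.2, fun γ hγ γ' hγ' => h.solTraj_injective hγ.1 hγ'.1, ?_⟩
  intro γ' hγ'
  obtain ⟨γ, hγ, rfl⟩ := h.exists_solTraj_eq hγ'.1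
  exact ⟨γ, ⟨hγ, hγ'⟩, rfl⟩

theorem mem_crossing_one_iff (hγ : γ ∈ Gamma η m) {x : ℤ} (hx : x ∈ tailF η γ) :
    γ ∈ crossing η ξ m 1 ↔ x ∈ Ioc (recPos (liftT ξ) 0) (recPos ξ 0) := by
  have hmem : solTraj η m γ 1 ∈ Gamma (bbsT η) m := h.solTraj_mem_Gamma hγ 1
  have hhead : headF (bbsT η) (solTraj η m γ 1) = tailF η γ := h.headF_solTraj_succ hγ 0
  have hx' := (mem_headF.1 (hhead ▸ hx)).1
  have hne : recPos ξ 0 ≠ x := fun he => (h.isSolitonShape_of_mem_Gamma hγ).not_isRecord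
    (mem_tailF.1 hx).1 (he ▸ h.isRecord_recPos 0)
  have hne' : recPos (liftT ξ) 0 ≠ x := fun he =>
    (h.next.isSolitonShape_of_mem_Gamma hmem).not_isRecord hx' (he ▸ h.next.isRecord_recPos 0)
  rw [mem_Ioc, hne'.le_iff_lt.symm, hne.symm.le_iff_lt,
    ← h.forall_lt_recPos_iff_of_mem hγ (mem_tailF.1 hx).1,
    ← h.next.forall_recPos_le_iff_of_mem hmem hx', and_comm]
  exact and_iff_right hγ

theorem finite_iUnion_crossing_one : (⋃ m, crossing η ξ m 1).Finite := by
  refine ((Ioc (recPos (liftT ξ) 0) (recPos ξ 0)).finite_toSet.biUnion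
    (t := fun x => {γ | ∃ m, γ ∈ Gamma η m ∧ x ∈ γ}) fun x _ => ?_).subset ?_
  · refine Set.Subsingleton.finite ?_
    rintro γ ⟨m, hγ, hx⟩ γ' ⟨m', hγ', hx'⟩
    exact h.Gamma_eq_of_mem hγ hγ' hx hx'
  · refine Set.iUnion_subset fun m γ hc => ?_
    have shape := h.isSolitonShape_of_mem_Gamma hc.1
    obtain ⟨x, hx, hempty, -⟩ := shape.exists_mem false 0 shape.one_le
    have htail := mem_tailF.2 ⟨hx, hempty⟩
    exact Set.mem_biUnion ((h.mem_crossing_one_iff hc.1 htail).1 hc) ⟨m, hc.1, hx⟩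

theorem exists_crossing_one_eq_empty : ∃ M, ∀ m > M, crossing η ξ m 1 = ∅ := by
  obtain ⟨M, hM⟩ := (h.finite_iUnion_crossing_one.image card).bddAbove
  refine ⟨M, fun m hm => Set.eq_empty_of_forall_notMem fun γ hγ => ?_⟩
  have hcard : #γ ≤ M := hM ⟨γ, Set.mem_iUnion_of_mem m hγ, rfl⟩
  have := (h.isSolitonShape_of_mem_Gamma hγ.1).le_card
  omega

theorem finite_crossing (m t : ℕ) : (crossing η ξ m t).Finite := by
  induction t with
  | zero => simp [h.crossing_zero]
  | succ t ih =>
    rw [h.crossing_succ]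
    refine ih.union (Set.Finite.of_finite_image ?_ (h.bijOn_solTraj m t).injOn)
    rw [(h.bijOn_solTraj m t).image_eq]
    exact (h.iterate t).finite_iUnion_crossing_one.subset
      (Set.subset_iUnion (fun m => crossing (bbsT^[t] η) (liftT^[t] ξ) m 1) m)

theorem exists_crossing_eq_empty (t : ℕ) : ∃ M, ∀ m > M, crossing η ξ m t = ∅ := by
  induction t with
  | zero => exact ⟨0, fun m _ => h.crossing_zero⟩
  | succ t ih =>
    obtain ⟨M, hM⟩ := ih
    obtain ⟨M', hM'⟩ := (h.iterate t).exists_crossing_one_eq_empty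
    refine ⟨max M M', fun m hm => ?_⟩
    rw [h.crossing_succ, hM m (by omega), Set.empty_union, ← Set.image_eq_empty,
      (h.bijOn_solTraj m t).image_eq, hM' m (by omega)]

theorem Jflow_succ (m t : ℕ) :
    Jflow η ξ m (t + 1) = Jflow η ξ m t + Jflow (bbsT^[t] η) (liftT^[t] ξ) m 1 := by
  have hcard := (h.bijOn_solTraj m t).injOn.ncard_image
  have hfin := h.finite_crossing m (t + 1)
  rw [(h.bijOn_solTraj m t).image_eq] at hcard
  rw [h.crossing_succ, Set.finite_union] at hfin
  rw [Jflow_eq_ncard_crossing, Jflow_eq_ncard_crossing, Jflow_eq_ncard_crossing, h.crossing_succ,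
    Set.ncard_union_eq (h.disjoint_crossing_iterate m t) hfin.1 hfin.2, hcard]

end IsDriftedLift

/-! ### Offsets -/

theorem ncard_setOf_fst_mem_and_snd_mem {α β : Type*} (s : Finset α) (L : α → Finset β) :
    Set.ncard {p : α × β | p.1 ∈ s ∧ p.2 ∈ L p.1} = ∑ a ∈ s, #(L a) := by
  rw [← card_sigma, ← Set.ncard_coe_finset,
    ← Set.ncard_image_of_injective _ (Equiv.sigmaEquivProd α β).injective,
    Equiv.image_eq_preimage_symm]
  congr 1
  ext p
  simp

theorem ncard_setOf_exists_mem_and_mem {α β : Type*} {X : ℕ → Set α} (hfin : ∀ m, (X m).Finite)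
    {k M : ℕ} (hM : ∀ m > M, X m = ∅) (hdisj : Pairwise (Function.onFun Disjoint X))
    {L : α → Finset β} {c : ℕ → ℕ} (hL : ∀ m, ∀ a ∈ X m, #(L a) = c m) :
    Set.ncard {p : α × β | ∃ m, k < m ∧ p.1 ∈ X m ∧ p.2 ∈ L p.1} =
      ∑ m ∈ Ioc k M, c m * (X m).ncard := by
  classical
  have mem_iff : ∀ a, a ∈ (Ioc k M).biUnion (fun m => (hfin m).toFinset) ↔
      ∃ m, k < m ∧ a ∈ X m := fun a => by
    simp only [mem_biUnion, mem_Ioc, Set.Finite.mem_toFinset]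
    refine exists_congr fun m => ⟨fun ha => ⟨ha.1.1, ha.2⟩, fun ha => ⟨⟨ha.1, ?_⟩, ha.2⟩⟩
    by_contra! hm
    exact Set.notMem_empty a (hM m hm ▸ ha.2)
  simp_rw [← and_assoc, exists_and_right, ← mem_iff, ncard_setOf_fst_mem_and_snd_mem]
  rw [sum_biUnion fun m _ m' _ hne => by simpa using hdisj hne]
  refine sum_congr rfl fun m _ => ?_
  rw [sum_congr rfl fun a ha => hL m a ((hfin m).mem_toFinset.1 ha), sum_const, smul_eq_mul,
    mul_comm, Set.ncard_eq_toFinset_card _ (hfin m)]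

namespace IsDriftedLift

variable {η η' : Cfg} {ξ ξ' : ℤ → ℤ} (h : IsDriftedLift η ξ)

include h

theorem pairwise_disjoint_crossing (t : ℕ) :
    Pairwise (Function.onFun Disjoint fun m => crossing η ξ m t) := fun _ _ hne =>
  Set.disjoint_left.2 fun _ hγ hγ' => hne ((h.isSolitonShape_of_mem_Gamma hγ.1).size_unique
    (h.isSolitonShape_of_mem_Gamma hγ'.1))

theorem oOff_eq_sum_Jflow (k : ℕ) {t M : ℕ} (hM : ∀ m > M, crossing η ξ m t = ∅) :
    oOff η ξ k t = ∑ m ∈ Ioc k M, 2 * (m - k) * Jflow η ξ m t := by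
  refine Eq.trans ?_ (ncard_setOf_exists_mem_and_mem (fun m => h.finite_crossing m t) hM
    (h.pairwise_disjoint_crossing t) (L := fun γ => {x ∈ γ | k ≤ seatLevel η x})
    fun m γ hγ => (h.isSolitonShape_of_mem_Gamma hγ.1).card_filter_le_seatLevel k)
  rw [oOff]
  congr 1
  ext ⟨γ, x⟩
  refine exists_congr fun m => and_congr_right fun _ => ?_
  rw [mem_filter, crossing, Set.mem_ofPred_eq, and_assoc, and_assoc]
  exact and_congr_right fun hγ => and_congr_right fun _ => and_congr_right fun _ =>
    (h.isSolitonShape_of_mem_Gamma hγ).rank_iff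

theorem oOff_zero (k : ℕ) : oOff η ξ k 0 = 0 := by
  rw [h.oOff_eq_sum_Jflow k (M := 0) fun m _ => h.crossing_zero]
  simp

theorem oOff_succ (k t : ℕ) :
    oOff η ξ k (t + 1) = oOff η ξ k t + oOff (bbsT^[t] η) (liftT^[t] ξ) k 1 := by
  obtain ⟨M₁, hM₁⟩ := h.exists_crossing_eq_empty (t + 1)
  obtain ⟨M₂, hM₂⟩ := h.exists_crossing_eq_empty t
  obtain ⟨M₃, hM₃⟩ := (h.iterate t).exists_crossing_eq_empty 1
  rw [h.oOff_eq_sum_Jflow k (M := max M₁ (max M₂ M₃)) fun m hm => hM₁ m (by omega),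
    h.oOff_eq_sum_Jflow k (M := max M₁ (max M₂ M₃)) fun m hm => hM₂ m (by omega),
    (h.iterate t).oOff_eq_sum_Jflow k (M := max M₁ (max M₂ M₃)) fun m hm => hM₃ m (by omega),
    ← sum_add_distrib]
  simp_rw [h.Jflow_succ, mul_add]

theorem mem_highBalls_iff {k : ℕ} {x : ℤ} :
    x ∈ highBalls (bbsT η) k (recPos (liftT ξ) 0) (recPos ξ 0) ↔
      ∃ γ m, k < m ∧ γ ∈ crossing η ξ m 1 ∧ x ∈ γ ∧ η x = false ∧ k ≤ seatLevel η x := by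
  rw [highBalls, mem_filter]
  constructor
  · rintro ⟨hx, hball, hlevel⟩
    rw [h.seatLevel_bbsT hball] at hlevel
    obtain ⟨hempty, hr⟩ := bbsT_eq_true_iff.1 hball
    obtain ⟨m, γ, hγ, hxγ⟩ := h.exists_mem_Gamma hr
    exact ⟨γ, m, hlevel.trans_lt ((h.isSolitonShape_of_mem_Gamma hγ).seatLevel_lt hxγ),
      (h.mem_crossing_one_iff hγ (mem_tailF.2 ⟨hxγ, hempty⟩)).2 hx, hxγ, hempty, hlevel⟩
  · rintro ⟨γ, m, -, hc, hxγ, hempty, hlevel⟩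
    have htail := mem_tailF.2 ⟨hxγ, hempty⟩
    have hball := h.bbsT_eq_true_of_mem_tailF hc.1 htail
    exact ⟨(h.mem_crossing_one_iff hc.1 htail).1 hc, hball, (h.seatLevel_bbsT hball).symm ▸ hlevel⟩

theorem two_mul_card_highBalls (k : ℕ) :
    2 * #(highBalls (bbsT η) k (recPos (liftT ξ) 0) (recPos ξ 0)) = oOff η ξ k 1 := by
  obtain ⟨M, hM⟩ := h.exists_crossing_eq_empty 1
  have hpairs := ncard_setOf_exists_mem_and_mem (fun m => h.finite_crossing m 1) (k := k) hM
    (h.pairwise_disjoint_crossing 1) (L := fun γ => {x ∈ γ | η x = false ∧ k ≤ seatLevel η x})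
    fun m γ hγ => (h.isSolitonShape_of_mem_Gamma hγ.1).card_filter_eq_and_le_seatLevel k false
  have hinj : Set.InjOn Prod.snd {p : Finset ℤ × ℤ | ∃ m, k < m ∧ p.1 ∈ crossing η ξ m 1 ∧
      p.2 ∈ {x ∈ p.1 | η x = false ∧ k ≤ seatLevel η x}} := by
    rintro ⟨γ, x⟩ ⟨m, -, hγ, hx⟩ ⟨γ', x'⟩ ⟨m', -, hγ', hx'⟩ (rfl : x = x')
    exact congrArg (·, x)
      (h.Gamma_eq_of_mem hγ.1 hγ'.1 (mem_filter.1 hx).1 (mem_filter.1 hx').1)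
  have himage : Prod.snd '' {p : Finset ℤ × ℤ | ∃ m, k < m ∧ p.1 ∈ crossing η ξ m 1 ∧
      p.2 ∈ {x ∈ p.1 | η x = false ∧ k ≤ seatLevel η x}} =
      highBalls (bbsT η) k (recPos (liftT ξ) 0) (recPos ξ 0) := by
    ext x
    simp [h.mem_highBalls_iff]
  rw [← hinj.ncard_image, himage, Set.ncard_coe_finset] at hpairs
  rw [hpairs, h.oOff_eq_sum_Jflow k hM, mul_sum]
  exact sum_congr rfl fun m _ => (mul_assoc _ _ _).symm

theorem solitonIndex_solTraj {k : ℕ} {γ : Finset ℤ} (hγ : γ ∈ Gamma η k) (t : ℕ) :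
    solitonIndex (bbsT^[t] η) (liftT^[t] ξ) k (solTraj η k γ t) =
      solitonIndex η ξ k γ + oOff η ξ k t + k * t := by
  induction t with
  | zero => simp [h.oOff_zero, solTraj]
  | succ t ih =>
    have hoff := (h.iterate t).two_mul_card_highBalls k
    rw [← Function.iterate_succ_apply' bbsT, ← Function.iterate_succ_apply' liftT] at hoff
    rw [h.solitonIndex_solTraj_succ hγ, ih, h.oOff_succ]
    push_cast [← hoff]
    ring

/-! ### The hierarchy -/

theorem ncard_slots_crossing_soliton {k : ℕ} {γ : Finset ℤ} (hγ : γ ∈ Gamma η k) (t : ℕ) :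
    Set.ncard {i : ℤ | (∀ x ∈ γ, x < skEnum η ξ k i) ∧
      ∀ x ∈ solTraj η k γ t, skEnumT η ξ k t i ≤ x} = k * t := by
  have : {i : ℤ | (∀ x ∈ γ, x < skEnum η ξ k i) ∧
      ∀ x ∈ solTraj η k γ t, skEnumT η ξ k t i ≤ x} =
      Ioc (solitonIndex η ξ k γ) (solitonIndex η ξ k γ + (k * t : ℕ)) := by
    ext i
    rw [coe_Ioc, Set.mem_ofPred_eq, Set.mem_Ioc, h.forall_lt_skEnum_iff hγ]
    simp_rw [skEnumT]
    rw [(h.iterate t).forall_skEnum_le_iff (h.solTraj_mem_Gamma hγ t), h.solitonIndex_solTraj hγ]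
    push_cast
    omega
  rw [this, Set.ncard_coe_finset, Int.card_Ioc, add_sub_cancel_left, Int.toNat_natCast]

theorem Mk_iterate (k t : ℕ) (i : ℤ) :
    Mk (bbsT^[t] η) (liftT^[t] ξ) k i = Mk η ξ k (i - oOff η ξ k t - k * t) := by
  rw [(h.iterate t).Mk_eq_ncard, h.Mk_eq_ncard]
  refine (Set.BijOn.ncard_eq (f := fun γ => solTraj η k γ t)
    ⟨?_, fun γ hγ γ' hγ' => h.solTraj_injective hγ.1 hγ'.1, ?_⟩).symm
  · rintro γ ⟨hγ, hi⟩
    exact ⟨h.solTraj_mem_Gamma hγ t, by rw [h.solitonIndex_solTraj hγ, hi]; ring⟩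
  · rintro γ' ⟨hγ', hi⟩
    obtain ⟨γ, hγ, rfl⟩ := h.exists_solTraj_eq hγ'
    rw [h.solitonIndex_solTraj hγ] at hi
    exact ⟨γ, ⟨hγ, by rw [← hi]; ring⟩, rfl⟩

theorem Jflow_eq_sum_Mk (m t : ℕ) :
    Jflow η ξ m t = ∑ i ∈ Ico (-((oOff η ξ m t : ℤ) + m * t)) 0, Mk η ξ m i := by
  classical
  have mem_iff : ∀ {γ}, γ ∈ Gamma η m → (γ ∈ crossing η ξ m t ↔
      solitonIndex η ξ m γ ∈ Ico (-((oOff η ξ m t : ℤ) + m * t)) 0) := fun {γ} hγ => by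
    rw [h.mem_crossing_iff hγ, h.solitonIndex_solTraj hγ, mem_Ico]
    omega
  have hfin := h.finite_crossing m t
  rw [Jflow_eq_ncard_crossing, Set.ncard_eq_toFinset_card _ hfin,
    card_eq_sum_card_fiberwise (f := solitonIndex η ξ m) fun γ hγ =>
      (mem_iff (hfin.mem_toFinset.1 hγ).1).1 (hfin.mem_toFinset.1 hγ)]
  refine sum_congr rfl fun i hi => ?_
  rw [h.Mk_eq_ncard, ← Set.ncard_coe_finset]
  congr 1
  ext γ
  simp only [coe_filter, hfin.mem_toFinset, Set.mem_ofPred_eq]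
  refine and_congr_left fun hγi => ⟨fun hc => hc.1, fun hγ => (mem_iff hγ).2 (hγi ▸ hi)⟩

/-- Downward induction on the size: the offset of size `k` is a sum of the flows of larger
solitons, and the flow of `m`-solitons is read off `Mk η ξ m` in a window of length
`oOff η ξ m t + m * t`. -/
theorem oOff_congr (h' : IsDriftedLift η' ξ') {k : ℕ} (t : ℕ)
    (heq : ∀ m > k, ∀ i, Mk η ξ m i = Mk η' ξ' m i) : oOff η ξ k t = oOff η' ξ' k t := by
  obtain ⟨M₁, hM₁⟩ := h.exists_crossing_eq_empty t
  obtain ⟨M₂, hM₂⟩ := h'.exists_crossing_eq_empty t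
  have hsum := fun k => h.oOff_eq_sum_Jflow k (M := max M₁ M₂) fun m hm => hM₁ m (by omega)
  have hsum' := fun k => h'.oOff_eq_sum_Jflow k (M := max M₁ M₂) fun m hm => hM₂ m (by omega)
  induction hd : max M₁ M₂ - k using Nat.strong_induction_on generalizing k with
  | _ d ih =>
    rw [hsum, hsum']
    refine sum_congr rfl fun m hm => ?_
    rw [mem_Ioc] at hm
    rw [h.Jflow_eq_sum_Mk, h'.Jflow_eq_sum_Mk,
      ih _ (by omega) (fun n hn => heq n (hm.1.trans hn)) rfl]
    simp_rw [heq m hm.1]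

end IsDriftedLift

theorem component_hierarchy_general {η : Cfg} {ξ : ℤ → ℤ} (h : IsDriftedLift η ξ) (t : ℕ) :
    (∀ k : ℕ, ∀ γ ∈ Gamma η k,
      Set.ncard {i : ℤ | (∀ x ∈ γ, x < skEnum η ξ k i) ∧
        ∀ x ∈ solTraj η k γ t, skEnumT η ξ k t i ≤ x} = k * t) ∧
    (∀ k : ℕ, ∀ i : ℤ,
      Mk (bbsT^[t] η) (liftT^[t] ξ) k i = Mk η ξ k (i - oOff η ξ k t - k * t)) ∧
    (∀ (η' : Cfg) (ξ' : ℤ → ℤ), IsDriftedLift η' ξ' →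
      ∀ k : ℕ, (∀ m > k, ∀ i, Mk η ξ m i = Mk η' ξ' m i) → oOff η ξ k t = oOff η' ξ' k t) :=
  ⟨fun _ _ hγ => h.ncard_slots_crossing_soliton hγ t, fun k i => h.Mk_iterate k t i,
    fun _ _ hlift _ heq => h.oOff_congr hlift t heq⟩

/-- **hierarchy theorem.** Let `ξ` be a walk lift (with finite
running minimum) of some `η ∈ 𝒳` and let `t ≥ 1`.  Then:
(i) for every `k ≥ 1` and every `k`-soliton `γ` of `η`, the right-to-left flow
of relabeled `k`-slots through the tagged soliton between times `0` and `t` is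
exactly `k·t`;
(ii) the `k`-component of `T^t ξ` is a shift of that of `ξ`:
`M_k(T^t ξ)(i) = M_k ξ(i − o_k^t(ξ) − kt)`;
(iii) for each `k`, the offset `o_k^t(ξ)` is determined by the components
`(M_m ξ)_{m>k}` alone. -/
theorem component_hierarchy (η : Cfg) (ξ : ℤ → ℤ) (hη : inX η)
    (hlift : IsLift η ξ) (hbdd : ∀ x : ℤ, BddBelow (ξ '' Set.Iic x))
    (t : ℕ) (ht : 1 ≤ t) :
    (∀ k : ℕ, 1 ≤ k → ∀ γ ∈ Gamma η k,
      Set.ncard {i : ℤ | (∀ x ∈ γ, x < skEnum η ξ k i) ∧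
        ∀ x ∈ solTraj η k γ t, skEnumT η ξ k t i ≤ x} = k * t) ∧
    (∀ k : ℕ, 1 ≤ k → ∀ i : ℤ,
      Mk (bbsT^[t] η) (liftT^[t] ξ) k i =
        Mk η ξ k (i - (oOff η ξ k t : ℤ) - (k : ℤ) * (t : ℤ))) ∧
    (∀ (η' : Cfg) (ξ' : ℤ → ℤ), inX η' → IsLift η' ξ' →
      (∀ x : ℤ, BddBelow (ξ' '' Set.Iic x)) →
      ∀ k : ℕ, 1 ≤ k → (∀ m : ℕ, k < m → ∀ i : ℤ, Mk η ξ m i = Mk η' ξ' m i) →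
        oOff η ξ k t = oOff η' ξ' k t) := by
  obtain ⟨flow, shift, offset⟩ := component_hierarchy_general (isDriftedLift_of_inX hη hlift) t
  exact ⟨fun k _ => flow k, fun k _ => shift k,
    fun _ _ hη' hlift' _ k _ => offset _ _ (isDriftedLift_of_inX hη' hlift') k⟩
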